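/- arXiv:1708.05218 — 5 statements merged into one kernel-verified Lean document; each statement's English description precedes it below -/
import Mathlib

section
/- Let X be a real Banach space with the Daugavet property. Then there exists a bounded SCD set B ⊂ X such that the union B ∪ (−B) is not SCD. -/
open Bornology Set Pointwise

variable {X : Type*} [NormedAddCommGroup X] [NormedSpace ℝ X]

/-- The sliceSet of `A` given by the functional `f` and `ε > 0`. -/
noncomputable def sliceSet (A : Set X) (f : X →L[ℝ] ℝ) (ε : ℝ) : Set X :=
  {x ∈ A | sSup (f '' A) - ε < f x}

/-- `S` is a sliceSet of `A`: a nonempty set of the form `sliceSet A f ε` with `f ≠ 0`, `ε > 0`. -/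
def IsSlice (A S : Set X) : Prop :=
  S.Nonempty ∧ ∃ f : X →L[ℝ] ℝ, f ≠ 0 ∧ ∃ ε : ℝ, 0 < ε ∧ S = sliceSet A f ε

/-- A sequence of subsets of `A` is determining if every set `B` meeting all of them
has `A` inside the closed convex hull of `B`. -/
def Determining (A : Set X) (V : ℕ → Set X) : Prop :=
  ∀ B : Set X, (∀ n, (B ∩ V n).Nonempty) → A ⊆ closure (convexHull ℝ B)

/-- A bounded set is slicely countably determined if it has a determining sequence of slices. -/
def IsSCD (A : Set X) : Prop :=
  ∃ V : ℕ → Set X, (∀ n, IsSlice A (V n)) ∧ Determining A V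

/-- The Daugavet property: every rank-one operator `x ↦ f x • y` satisfies the
Daugavet equation `‖Id + T‖ = 1 + ‖T‖`. -/
def DaugavetProperty (X : Type*) [NormedAddCommGroup X] [NormedSpace ℝ X] : Prop :=
  ∀ (f : X →L[ℝ] ℝ) (y : X),
    ‖ContinuousLinearMap.id ℝ X + f.smulRight y‖ = 1 + ‖f.smulRight y‖



lemma dp_norm_two (h : DaugavetProperty X) (f : X →L[ℝ] ℝ) (hf : ‖f‖ = 1) (v : X) (hv : ‖v‖ = 1)
    (e : ℝ) (he : 0 < e) (he1 : e < 1) :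
    ∃ (g : X →L[ℝ] ℝ) (y : X), ‖g‖ ≤ 1 ∧ ‖y‖ ≤ 1 ∧ 1 - e < g y ∧ 1 - e < f y ∧ 1 - e < g v := by
  have h2 : ‖ContinuousLinearMap.id ℝ X + f.smulRight v‖ = 2 := by
    rw [h f v, ContinuousLinearMap.norm_smulRight_apply, hf, hv]; norm_num
  obtain ⟨y, hy, hy2⟩ := ContinuousLinearMap.exists_lt_apply_of_lt_opNorm
    (ContinuousLinearMap.id ℝ X + f.smulRight v) (r := 2 - e) (by rw [h2]; linarith)
  obtain ⟨g, hg, hgu⟩ := exists_dual_vector'' ℝ ((ContinuousLinearMap.id ℝ X + f.smulRight v) y)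
  have hgu' : g y + f y * g v > 2 - e := by
    have : g ((ContinuousLinearMap.id ℝ X + f.smulRight v) y) = g y + f y * g v := by simp
    rw [← this, hgu]; exact hy2
  have b1 : |g y| ≤ 1 := by
    have := g.le_opNorm y
    rw [Real.norm_eq_abs] at this
    nlinarith [norm_nonneg g, norm_nonneg y]
  have b2 : |f y| ≤ 1 := by
    have := f.le_opNorm y
    rw [Real.norm_eq_abs] at this
    nlinarith [norm_nonneg f, norm_nonneg y]
  have b3 : |g v| ≤ 1 := by
    have := g.le_opNorm v
    rw [Real.norm_eq_abs] at this
    nlinarith [norm_nonneg g, norm_nonneg v]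
  rw [abs_le] at b1 b2 b3
  rcases le_total 0 (f y) with h0 | h0
  · refine ⟨g, y, hg, hy.le, ?_, ?_, ?_⟩ <;> nlinarith
  · refine ⟨-g, -y, by simpa using hg, by simpa using hy.le, ?_, ?_, ?_⟩ <;> simp <;> nlinarith

lemma dp_slice_one (h : DaugavetProperty X) (f : X →L[ℝ] ℝ) (hf : f ≠ 0) (c : ℝ) (hc : c < ‖f‖)
    (v : X) (hv : ‖v‖ = 1) (ε : ℝ) (hε : 0 < ε) :
    ∃ (f' : X →L[ℝ] ℝ) (c' : ℝ), f' ≠ 0 ∧ c' < ‖f'‖ ∧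
      ∀ y, ‖y‖ ≤ 1 → c' < f' y → c < f y ∧ 2 - ε < ‖v + y‖ := by
  have ha : 0 < ‖f‖ := norm_pos_iff.2 hf
  set a := ‖f‖ with ha'
  have hd : 0 < 1 - c / a := by rw [sub_pos, div_lt_one ha]; exact hc
  obtain ⟨e, he, he1, he2, he3⟩ : ∃ e : ℝ, 0 < e ∧ e ≤ 1/4 ∧ 4 * e ≤ ε ∧ 3 * e ≤ 1 - c / a := by
    refine ⟨min (1/4) (min (ε/4) ((1 - c/a)/3)), ?_, ?_, ?_, ?_⟩
    · positivity
    · exact min_le_left _ _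
    · have := (min_le_right (1/4) (min (ε/4) ((1 - c/a)/3))).trans (min_le_left _ _); linarith
    · have := (min_le_right (1/4) (min (ε/4) ((1 - c/a)/3))).trans (min_le_right _ _); linarith
  have hn : ‖a⁻¹ • f‖ = 1 := by
    rw [norm_smul, norm_inv, Real.norm_eq_abs, abs_of_pos ha, ← ha']; field_simp
  obtain ⟨g, y1, hg, hy1, h1, h2, h3⟩ := dp_norm_two h (a⁻¹ • f) hn v hv e he (by linarith)
  have key : 2 - 2 * e < (g + a⁻¹ • f) y1 := by
    rw [_root_.add_apply]; linarith
  refine ⟨g + a⁻¹ • f, 2 - 3 * e, ?_, ?_, ?_⟩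
  · intro h0
    rw [h0] at key
    simp at key; linarith
  · have := (g + a⁻¹ • f).le_opNorm y1
    have h4 := le_abs_self ((g + a⁻¹ • f) y1)
    rw [Real.norm_eq_abs] at this
    nlinarith [norm_nonneg (g + a⁻¹ • f)]
  · intro y hy hy2
    rw [_root_.add_apply] at hy2
    have q1 : g y ≤ 1 := by
      have := g.le_opNorm y
      have h4 := le_abs_self (g y)
      rw [Real.norm_eq_abs] at this
      nlinarith [norm_nonneg g, norm_nonneg y]
    have q2 : (a⁻¹ • f) y ≤ 1 := by
      have := (a⁻¹ • f).le_opNorm y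
      have h4 := le_abs_self ((a⁻¹ • f) y)
      rw [Real.norm_eq_abs, hn] at this
      linarith
    constructor
    · have q3 : c / a < (a⁻¹ • f) y := by linarith
      have q4 : (a⁻¹ • f) y = f y / a := by simp; ring
      rw [q4] at q3
      exact (div_lt_div_iff_of_pos_right ha).1 q3
    · have := g.le_opNorm (v + y)
      have h4 := le_abs_self (g (v + y))
      rw [Real.norm_eq_abs] at this
      have h5 : g (v + y) = g v + g y := map_add _ _ _
      nlinarith [norm_nonneg (v + y)]

lemma dp_slice_finset (h : DaugavetProperty X) (f : X →L[ℝ] ℝ) (hf : f ≠ 0) (c : ℝ) (hc : c < ‖f‖)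
    (ε : ℝ) (hε : 0 < ε) (V : Finset X) :
    (∀ v ∈ V, ‖v‖ = 1) →
    ∃ (f' : X →L[ℝ] ℝ) (c' : ℝ), f' ≠ 0 ∧ c' < ‖f'‖ ∧
      ∀ y, ‖y‖ ≤ 1 → c' < f' y → c < f y ∧ ∀ v ∈ V, 2 - ε < ‖v + y‖ := by
  classical
  induction V using Finset.induction_on with
  | empty => intro _; exact ⟨f, c, hf, hc, fun y _ h => ⟨h, by simp⟩⟩
  | insert v V hv ih =>
    intro hV
    obtain ⟨f1, c1, h1, h2, h3⟩ := ih (fun w hw => hV w (Finset.mem_insert_of_mem hw))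
    obtain ⟨f2, c2, h4, h5, h6⟩ := dp_slice_one h f1 h1 c1 h2 v (hV v (Finset.mem_insert_self _ _)) ε hε
    refine ⟨f2, c2, h4, h5, fun y hy hy2 => ?_⟩
    obtain ⟨h7, h8⟩ := h6 y hy hy2
    obtain ⟨h9, h10⟩ := h3 y hy h7
    refine ⟨h9, fun w hw => ?_⟩
    rcases Finset.mem_insert.1 hw with rfl | hw
    · exact h8
    · exact h10 w hw

/-- almost `ℓ₁`-orthogonal vectors -/
def orthW (F : Submodule ℝ X) (η : ℝ) : Set X :=
  {y | ‖y‖ ≤ 1 ∧ ∀ v ∈ F, ∀ a : ℝ, (1 - η) * (‖v‖ + |a|) ≤ ‖v + a • y‖}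

lemma orth_aux (F : Submodule ℝ X) (hF : F ≠ ⊥) (η : ℝ) (hη : 0 < η) (y : X) (hy : ‖y‖ ≤ 1)
    (H : ∀ v ∈ F, ‖v‖ = 1 → 2 - η ≤ ‖v + y‖) : y ∈ orthW F η := by
  have pos : ∀ v ∈ F, ∀ a : ℝ, 0 ≤ a → (1 - η) * (‖v‖ + a) ≤ ‖v + a • y‖ := by
    intro v hv a ha
    by_cases hv0 : v = 0
    · subst hv0
      have h1 : 1 - η ≤ ‖y‖ := by
        obtain ⟨w, hw, hw0⟩ := Submodule.exists_mem_ne_zero_of_ne_bot hF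
        have hn : ‖‖w‖⁻¹ • w‖ = 1 := by
          rw [norm_smul, norm_inv, norm_norm]
          exact inv_mul_cancel₀ (norm_ne_zero_iff.2 hw0)
        have := H (‖w‖⁻¹ • w) (F.smul_mem _ hw) hn
        have h2 := norm_add_le (‖w‖⁻¹ • w) y
        rw [hn] at h2
        linarith
      rw [norm_zero, zero_add, zero_add, norm_smul, Real.norm_of_nonneg ha]
      nlinarith
    · set s := ‖v‖ with hs
      have hs0 : 0 < s := norm_pos_iff.2 hv0
      have hu : ‖s⁻¹ • v‖ = 1 := by
        rw [norm_smul, norm_inv, hs, norm_norm]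
        exact inv_mul_cancel₀ (norm_ne_zero_iff.2 hv0)
      have h1 := H (s⁻¹ • v) (F.smul_mem _ hv) hu
      have hvs : v = s • (s⁻¹ • v) := by rw [smul_smul, mul_inv_cancel₀ hs0.ne', one_smul]
      set u := s⁻¹ • v
      rcases le_total a s with has | has
      · have e1 : s • (u + y) = (v + a • y) + (s - a) • y := by
          rw [hvs]; module
        have e2 := norm_add_le (v + a • y) ((s - a) • y)
        rw [← e1, norm_smul, norm_smul, Real.norm_of_nonneg hs0.le, Real.norm_of_nonneg (sub_nonneg.2 has)] at e2
        nlinarith [mul_le_mul_of_nonneg_left h1 hs0.le, mul_le_mul_of_nonneg_left hy (sub_nonneg.2 has)]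
      · have e1 : a • (u + y) = (v + a • y) + (a - s) • u := by
          rw [hvs]; module
        have e2 := norm_add_le (v + a • y) ((a - s) • u)
        rw [← e1, norm_smul, norm_smul, Real.norm_of_nonneg ha, Real.norm_of_nonneg (sub_nonneg.2 has), hu] at e2
        nlinarith [mul_le_mul_of_nonneg_left h1 ha]
  refine ⟨hy, fun v hv a => ?_⟩
  rcases le_total 0 a with ha | ha
  · rw [abs_of_nonneg ha]; exact pos v hv a ha
  · rw [abs_of_nonpos ha]
    have := pos (-v) (F.neg_mem hv) (-a) (by linarith)
    rw [norm_neg] at this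
    convert this using 1
    rw [← norm_neg]; congr 1; module

lemma orth_slice (h : DaugavetProperty X) (F : Submodule ℝ X) [FiniteDimensional ℝ F] (hF : F ≠ ⊥)
    (η : ℝ) (hη : 0 < η) (f : X →L[ℝ] ℝ) (hf : f ≠ 0) (c : ℝ) (hc : c < ‖f‖) :
    ∃ y ∈ orthW F η, c < f y := by
  classical
  have hcomp : IsCompact (Metric.sphere (0 : F) 1) := isCompact_sphere _ _
  obtain ⟨t, ht, htf, hcov⟩ := finite_cover_balls_of_compact hcomp (half_pos hη)
  obtain ⟨f', c', h1, h2, h3⟩ := dp_slice_finset h f hf c hc (η/2) (half_pos hη)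
    (htf.toFinset.image (fun v : F => (v : X))) (by
      intro v hv
      rw [Finset.mem_image] at hv
      obtain ⟨w, hw, rfl⟩ := hv
      have := ht (htf.mem_toFinset.1 hw)
      simpa using this)
  have : ∃ y : X, ‖y‖ ≤ 1 ∧ c' < f' y := by
    obtain ⟨y, hy, hy2⟩ := ContinuousLinearMap.exists_lt_apply_of_lt_opNorm f' h2
    rw [Real.norm_eq_abs] at hy2
    rcases lt_abs.1 hy2 with h | h
    · exact ⟨y, hy.le, h⟩
    · exact ⟨-y, by simpa using hy.le, by simpa using h⟩
  obtain ⟨y, hy, hy2⟩ := this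
  obtain ⟨h4, h5⟩ := h3 y hy hy2
  refine ⟨y, orth_aux F hF η hη y hy ?_, h4⟩
  intro v hv hv1
  have hm : (⟨v, hv⟩ : F) ∈ Metric.sphere (0 : F) 1 := by simpa using hv1
  have := hcov hm
  simp only [mem_iUnion] at this
  obtain ⟨w, hw, hw2⟩ := this
  have h6 := h5 (w : X) (Finset.mem_image.2 ⟨w, htf.mem_toFinset.2 hw, rfl⟩)
  have h7 : ‖(v : X) - w‖ < η / 2 := by
    rw [Metric.mem_ball, dist_eq_norm] at hw2
    simpa using hw2
  have h8 := norm_sub_le (v + y) (v - (w : X))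
  have h9 : v + y - (v - (w : X)) = w + y := by abel
  rw [h9] at h8
  linarith

lemma orth_dense (h : DaugavetProperty X) (F : Submodule ℝ X) [FiniteDimensional ℝ F] (hF : F ≠ ⊥)
    (η : ℝ) (hη : 0 < η) (x : X) (hx : ‖x‖ ≤ 1) :
    x ∈ closure (convexHull ℝ (orthW F η)) := by
  by_contra hn
  obtain ⟨f, u, hu, hux⟩ := geometric_hahn_banach_closed_point
    (convex_convexHull ℝ (orthW F η)).closure isClosed_closure hn
  have hu' : ∀ y ∈ orthW F η, f y < u := fun y hy => hu y (subset_closure (subset_convexHull ℝ _ hy))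
  by_cases hf : f = 0
  · obtain ⟨w, hw, hw0⟩ := Submodule.exists_mem_ne_zero_of_ne_bot hF
    obtain ⟨g, hg, hg2⟩ := exists_dual_vector'' ℝ w
    have hg0 : g ≠ 0 := by
      rintro rfl
      have := norm_pos_iff.2 hw0
      have h0 : (0 : ℝ) = ‖w‖ := hg2
      linarith
    obtain ⟨y, hy, -⟩ := orth_slice h F hF η hη g hg0 0 (norm_pos_iff.2 hg0)
    have := hu' y hy
    subst hf
    simp at this hux
    linarith
  · have : u < ‖f‖ := by
      have h1 := f.le_opNorm x
      have h2 := le_abs_self (f x)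
      rw [Real.norm_eq_abs] at h1
      nlinarith [norm_nonneg f]
    obtain ⟨y, hy, hy2⟩ := orth_slice h F hF η hη f hf u this
    exact absurd (hu' y hy) (not_lt.2 hy2.le)

/-- properties of the quotient seminorm modulo `z` -/
structure IsQN (z : X) (N : X → ℝ) : Prop where
  smul : ∀ (c : ℝ) (x : X), N (c • x) = |c| * N x
  le : ∀ x, N x ≤ ‖x‖
  ge : ∀ x m, (∀ a : ℝ, m ≤ ‖x + a • z‖) → m ≤ N x
  dual : ∀ x, ∃ g : X →L[ℝ] ℝ, g z = 0 ∧ g x = N x ∧ ∀ w, g w ≤ N w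

lemma exists_QN (z : X) : ∃ N : X → ℝ, IsQN z N := by
  let S : Submodule ℝ X := Submodule.span ℝ {z}
  have : IsClosed (S : Set X) := Submodule.closed_of_finiteDimensional S
  refine ⟨fun x => ‖(Submodule.Quotient.mk x : X ⧸ S)‖, ?_, ?_, ?_, ?_⟩
  · intro c x
    rw [Submodule.Quotient.mk_smul, norm_smul, Real.norm_eq_abs]
  · intro x
    exact Submodule.Quotient.norm_mk_le S x
  · intro x m hm
    refine le_of_forall_pos_le_add fun ε hε => ?_
    obtain ⟨y, hy, hy2⟩ := Submodule.Quotient.norm_mk_lt (Submodule.Quotient.mk x : X ⧸ S) hε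
    have h1 : y - x ∈ S := (Submodule.Quotient.eq S).1 hy
    obtain ⟨a, ha⟩ := Submodule.mem_span_singleton.1 h1
    have := hm a
    rw [ha] at this
    simp only [add_sub_cancel] at this
    linarith
  · intro x
    obtain ⟨g, hg, hg2⟩ := exists_dual_vector'' ℝ (Submodule.Quotient.mk x : X ⧸ S)
    refine ⟨g.comp S.mkQL, ?_, ?_, ?_⟩
    · have : (Submodule.Quotient.mk z : X ⧸ S) = 0 :=
        (Submodule.Quotient.mk_eq_zero S).2 (Submodule.mem_span_singleton_self z)
      show g (Submodule.Quotient.mk z : X ⧸ S) = 0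
      rw [this, map_zero]
    · exact hg2
    · intro w
      show g (Submodule.Quotient.mk w : X ⧸ S) ≤ _
      have h1 := g.le_opNorm (Submodule.Quotient.mk w : X ⧸ S)
      have h2 := le_abs_self (g (Submodule.Quotient.mk w : X ⧸ S))
      rw [Real.norm_eq_abs] at h1
      nlinarith [norm_nonneg (Submodule.Quotient.mk w : X ⧸ S)]

/-- the new block `Y` over the finite set `T` -/
structure IsStep (N : X → ℝ) (δ : ℝ) (T Y : Finset X) : Prop where
  norm_le : ∀ y ∈ Y, ‖y‖ ≤ 1
  lt_one : ∀ y ∈ Y, N y < 1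
  gt : ∀ y ∈ Y, 1 - δ < N y
  mono : ∀ y ∈ Y, ∀ t ∈ T, N t < N y
  inj : ∀ y ∈ Y, ∀ y' ∈ Y, N y = N y' → y = y'
  orth : ∀ y ∈ Y, ∀ v ∈ Submodule.span ℝ (T : Set X), ∀ a : ℝ, (1 - δ) * ‖v‖ ≤ ‖v + a • y‖
  approx : ∀ t ∈ T, ∀ G : X →L[ℝ] ℝ, ∃ y ∈ Y, |G t| - δ * ‖G‖ ≤ G y
  approx' : ∀ t ∈ T, ∀ G : X →L[ℝ] ℝ, ∃ y ∈ Y, |G t| - δ * ‖G‖ ≤ - G y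

lemma exists_step (h : DaugavetProperty X) {z : X} (hz : z ≠ 0) {N : X → ℝ} (hN : IsQN z N)
    (δ : ℝ) (hδ : 0 < δ) (hδ1 : δ < 1) (T : Finset X) (hzT : z ∈ T) (hT1 : ∀ t ∈ T, ‖t‖ ≤ 1)
    (hTN : ∀ t ∈ T, N t < 1) : ∃ Y : Finset X, IsStep N δ T Y := by
  classical
  obtain ⟨M, hM1, hMT, hMδ⟩ : ∃ M : ℝ, M < 1 ∧ (∀ t ∈ T, N t ≤ M) ∧ 1 - δ / 2 ≤ M := by
    obtain ⟨t0, ht0, ht⟩ := T.exists_max_image N ⟨z, hzT⟩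
    exact ⟨max (N t0) (1 - δ/2), max_lt (hTN _ ht0) (by linarith),
      fun t h => (ht t h).trans (le_max_left _ _), le_max_right _ _⟩
  let F := Submodule.span ℝ (T : Set X)
  have : FiniteDimensional ℝ F := FiniteDimensional.span_finset ℝ T
  have hzF : z ∈ F := Submodule.subset_span hzT
  have hF : F ≠ ⊥ := fun h0 => hz (by rw [h0] at hzF; simpa using hzF)
  set η := (1 - M) / 2 with hη
  have hη0 : 0 < η := by linarith
  -- finite approximating sets
  have fin : ∀ x : X, ‖x‖ ≤ 1 → ∃ A : Finset X, (A : Set X) ⊆ orthW F η ∧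
      ∃ w ∈ convexHull ℝ (A : Set X), ‖x - w‖ ≤ δ / 2 := by
    intro x hx
    obtain ⟨w, hw, hw2⟩ := Metric.mem_closure_iff.1 (orth_dense h F hF η hη0 x hx) (δ/2) (by linarith)
    rw [convexHull_eq_union_convexHull_finite_subsets] at hw
    simp only [mem_iUnion] at hw
    obtain ⟨A, hA, hA2⟩ := hw
    exact ⟨A, hA, w, hA2, by rw [← dist_eq_norm]; exact hw2.le⟩
  choose! A hA w hw hwx using fin
  let W0 : Finset X := (T ∪ T.image (fun t => -t)).biUnion A
  have hW0 : ∀ y ∈ W0, y ∈ orthW F η := by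
    intro y hy
    obtain ⟨x, hx, hxy⟩ := Finset.mem_biUnion.1 hy
    refine hA x ?_ hxy
    rcases Finset.mem_union.1 hx with hx | hx
    · exact hT1 x hx
    · obtain ⟨t, ht, rfl⟩ := Finset.mem_image.1 hx
      rw [norm_neg]; exact hT1 t ht
  have hNW : ∀ y ∈ orthW F η, 1 - η ≤ N y ∧ N y ≤ 1 := by
    intro y hy
    refine ⟨hN.ge y _ fun a => ?_, (hN.le y).trans hy.1⟩
    have := hy.2 (a • z) (F.smul_mem a hzF) 1
    rw [one_smul, abs_one, add_comm (a • z)] at this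
    nlinarith [norm_nonneg (a • z)]
  obtain ⟨e, he⟩ := countable_iff_exists_injOn.1 W0.countable_toSet
  let r : ℕ → ℝ := fun i => 1 - η - (1 - η - M) / (i + 2)
  have hgap : 0 < 1 - η - M := by linarith
  have hr1 : ∀ i, M < r i := by
    intro i
    have : (1 - η - M) / ((i : ℝ) + 2) < 1 - η - M := by
      apply div_lt_self hgap; have : (0 : ℝ) ≤ i := Nat.cast_nonneg i
      linarith
    show M < 1 - η - (1 - η - M) / (i + 2)
    linarith
  have hr2 : ∀ i, r i < 1 - η := by
    intro i
    have : 0 < (1 - η - M) / ((i : ℝ) + 2) := by positivity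
    show 1 - η - (1 - η - M) / (i + 2) < 1 - η
    linarith
  have hrinj : ∀ i j, r i = r j → i = j := by
    intro i j hij
    have h1 : (1 - η - M) / ((i : ℝ) + 2) = (1 - η - M) / ((j : ℝ) + 2) := by
      have : 1 - η - (1 - η - M) / ((i : ℝ) + 2) = 1 - η - (1 - η - M) / ((j : ℝ) + 2) := hij
      linarith
    have h2 : ((i : ℝ) + 2) = j + 2 := by
      have hi : (0 : ℝ) < (i : ℝ) + 2 := by positivity
      have hj : (0 : ℝ) < (j : ℝ) + 2 := by positivity
      rw [div_eq_div_iff hi.ne' hj.ne'] at h1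
      exact (mul_left_cancel₀ hgap.ne' h1).symm
    exact_mod_cast (add_right_cancel h2)
  let θ : X → ℝ := fun y => r (e y) / N y
  have hMpos : 0 < M := by linarith
  have hNpos : ∀ y ∈ W0, 0 < N y := fun y hy => by have := (hNW y (hW0 y hy)).1; linarith
  have hθ : ∀ y ∈ W0, 1 - δ / 2 ≤ θ y ∧ θ y ≤ 1 := by
    intro y hy
    have h1 := hNW y (hW0 y hy)
    have h2 := hr1 (e y)
    have h3 := hr2 (e y)
    have h4 := hNpos y hy
    constructor
    · rw [le_div_iff₀ h4]; nlinarith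
    · rw [div_le_one h4]; linarith
  have hNθ : ∀ y ∈ W0, N (θ y • y) = r (e y) := by
    intro y hy
    rw [hN.smul, abs_of_nonneg (by linarith [(hθ y hy).1])]
    exact div_mul_cancel₀ _ (hNpos y hy).ne'
  have app : ∀ x ∈ T ∪ T.image (fun t => -t), ∀ G : X →L[ℝ] ℝ,
      ∃ y ∈ W0.image (fun y => θ y • y), G x - δ * ‖G‖ ≤ G y := by
    intro x hx G
    have hx1 : ‖x‖ ≤ 1 := by
      rcases Finset.mem_union.1 hx with hx | hx
      · exact hT1 x hx
      · obtain ⟨t, ht, rfl⟩ := Finset.mem_image.1 hx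
        rw [norm_neg]; exact hT1 t ht
    obtain ⟨y, hy, hyG⟩ := ((G : X →ₗ[ℝ] ℝ).convexOn (convex_univ)).exists_ge_of_mem_convexHull
      (subset_univ _) (hw x hx1)
    simp only [ContinuousLinearMap.coe_coe] at hyG
    have hyW : y ∈ W0 := Finset.mem_biUnion.2 ⟨x, hx, hy⟩
    refine ⟨θ y • y, Finset.mem_image_of_mem _ hyW, ?_⟩
    have h1 : G x - G (w x) ≤ ‖G‖ * (δ / 2) := by
      rw [← map_sub]
      exact (le_abs_self _).trans ((G.le_opNorm _).trans
        (mul_le_mul_of_nonneg_left (hwx x hx1) (norm_nonneg _)))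
    have h2 : |G y| ≤ ‖G‖ := by
      have := G.le_opNorm y
      rw [Real.norm_eq_abs] at this
      nlinarith [norm_nonneg G, (hW0 y hyW).1]
    have h3 : G (θ y • y) = θ y * G y := by simp
    rw [h3]
    obtain ⟨h4, h5⟩ := hθ y hyW
    rw [abs_le] at h2
    have h6 : (1 - θ y) * G y ≤ δ / 2 * ‖G‖ :=
      (mul_le_mul_of_nonneg_left h2.2 (by linarith)).trans
        (mul_le_mul_of_nonneg_right (by linarith) (norm_nonneg _))
    linarith
  refine ⟨W0.image (fun y => θ y • y), ?_, ?_, ?_, ?_, ?_, ?_, ?_, ?_⟩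
  · intro y hy0
    obtain ⟨y, hy, rfl⟩ := Finset.mem_image.1 hy0
    show ‖θ y • y‖ ≤ 1
    rw [norm_smul, Real.norm_of_nonneg (by linarith [(hθ y hy).1])]
    nlinarith [(hθ y hy).1, (hθ y hy).2, (hW0 y hy).1, norm_nonneg y]
  · intro y hy0
    obtain ⟨y, hy, rfl⟩ := Finset.mem_image.1 hy0
    show N (θ y • y) < 1
    rw [hNθ y hy]; linarith [hr2 (e y)]
  · intro y hy0
    obtain ⟨y, hy, rfl⟩ := Finset.mem_image.1 hy0
    show _ < N (θ y • y)
    rw [hNθ y hy]; linarith [hr1 (e y)]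
  · intro y hy0 t ht
    obtain ⟨y, hy, rfl⟩ := Finset.mem_image.1 hy0
    show _ < N (θ y • y)
    rw [hNθ y hy]; linarith [hr1 (e y), hMT t ht]
  · intro y hy0 y' hy0' hyy
    obtain ⟨y, hy, rfl⟩ := Finset.mem_image.1 hy0
    obtain ⟨y', hy', rfl⟩ := Finset.mem_image.1 hy0'
    have hyy2 : N (θ y • y) = N (θ y' • y') := hyy
    rw [hNθ y hy, hNθ y' hy'] at hyy2
    have := he hy hy' (hrinj _ _ hyy2)
    rw [this]
  · intro y hy0 v hv a
    obtain ⟨y, hy, rfl⟩ := Finset.mem_image.1 hy0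
    have h1 := (hW0 y hy).2 v hv (a * θ y)
    rw [mul_smul] at h1
    refine le_trans ?_ h1
    apply mul_le_mul (by linarith) (by linarith [abs_nonneg (a * θ y)]) (norm_nonneg _) (by linarith)
  · intro t ht G
    rcases abs_choice (G t) with h | h <;> rw [h]
    · exact app t (Finset.mem_union_left _ ht) G
    · simpa using app (-t) (Finset.mem_union_right _ (Finset.mem_image_of_mem _ ht)) G
  · intro t ht G
    rcases abs_choice (G t) with h | h <;> rw [h]
    · simpa using app (-t) (Finset.mem_union_right _ (Finset.mem_image_of_mem _ ht)) (-G)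
    · simpa using app t (Finset.mem_union_left _ ht) (-G)

/-- tower of finite blocks -/
structure IsTower (z : X) (N : X → ℝ) (T Y : ℕ → Finset X) : Prop where
  qn : IsQN z N
  hz : ‖z‖ = 1
  mem : ∀ k, z ∈ T k
  sub : ∀ k, T k ⊆ T (k + 1)
  subY : ∀ k, Y k ⊆ T (k + 1)
  cases : ∀ k, ∀ t ∈ T k, t = z ∨ ∃ j < k, t ∈ Y j
  step : ∀ k, IsStep N ((1 / 2 : ℝ) ^ (k + 2)) (T k) (Y k)

lemma exists_tower (h : DaugavetProperty X) (z : X) (hz : ‖z‖ = 1) :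
    ∃ N T Y, IsTower z N T Y := by
  classical
  obtain ⟨N, hN⟩ := exists_QN z
  have hz0 : z ≠ 0 := by rintro rfl; simp at hz
  have hNz : N z < 1 := by
    obtain ⟨g, h1, h2, -⟩ := hN.dual z
    rw [← h2, h1]; norm_num
  have ex : ∀ (k : ℕ) (T : Finset X), (z ∈ T ∧ (∀ t ∈ T, ‖t‖ ≤ 1) ∧ ∀ t ∈ T, N t < 1) →
      ∃ Y : Finset X, IsStep N ((1 / 2 : ℝ) ^ (k + 2)) T Y := by
    rintro k T ⟨h1, h2, h3⟩
    exact exists_step h hz0 hN _ (by positivity)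
      (pow_lt_one₀ (by norm_num) (by norm_num) (by omega)) T h1 h2 h3
  choose! Y hY using ex
  let T : ℕ → Finset X := fun k => Nat.rec {z} (fun k T => T ∪ Y k T) k
  have hT0 : T 0 = {z} := rfl
  have hTs : ∀ k, T (k + 1) = T k ∪ Y k (T k) := fun k => rfl
  have good : ∀ k, z ∈ T k ∧ (∀ t ∈ T k, ‖t‖ ≤ 1) ∧ ∀ t ∈ T k, N t < 1 := by
    intro k
    induction k with
    | zero =>
      rw [hT0]
      simp [hz, hNz]
    | succ k ih =>
      have hs := hY k (T k) ih
      rw [hTs]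
      refine ⟨Finset.mem_union_left _ ih.1, fun t ht => ?_, fun t ht => ?_⟩
      · rcases Finset.mem_union.1 ht with ht | ht
        · exact ih.2.1 t ht
        · exact hs.norm_le t ht
      · rcases Finset.mem_union.1 ht with ht | ht
        · exact ih.2.2 t ht
        · exact hs.lt_one t ht
  refine ⟨N, T, fun k => Y k (T k), hN, hz, fun k => (good k).1, ?_, ?_, ?_, fun k => hY k _ (good k)⟩
  · intro k; rw [hTs]; exact Finset.subset_union_left
  · intro k; rw [hTs]; exact Finset.subset_union_right
  · intro k
    induction k with
    | zero => intro t ht; left; rw [hT0] at ht; simpa using ht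
    | succ k ih =>
      intro t ht
      rw [hTs] at ht
      rcases Finset.mem_union.1 ht with ht | ht
      · rcases ih t ht with h | ⟨j, hj, hj2⟩
        · exact Or.inl h
        · exact Or.inr ⟨j, by omega, hj2⟩
      · exact Or.inr ⟨k, by omega, ht⟩

section tower
variable {z : X} {N : X → ℝ} {T Y : ℕ → Finset X}

lemma IsTower.subset (H : IsTower z N T Y) {j k : ℕ} (hjk : j ≤ k) : T j ⊆ T k :=
  monotone_nat_of_le_succ H.sub hjk

lemma IsTower.N_z (H : IsTower z N T Y) : N z = 0 := by
  obtain ⟨g, h1, h2, -⟩ := H.qn.dual z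
  rw [← h2, h1]

lemma IsTower.N_pos (H : IsTower z N T Y) {k : ℕ} {y : X} (hy : y ∈ Y k) : 0 < N y := by
  have := (H.step k).mono y hy z (H.mem k)
  rwa [H.N_z] at this

lemma IsTower.N_mono (H : IsTower z N T Y) {j k : ℕ} (hjk : j < k) {y y' : X} (hy : y ∈ Y j)
    (hy' : y' ∈ Y k) : N y < N y' :=
  (H.step k).mono y' hy' y (H.subset hjk (H.subY j hy))

lemma IsTower.N_inj (H : IsTower z N T Y) {j k : ℕ} {y y' : X} (hy : y ∈ Y j)
    (hy' : y' ∈ Y k) (hN : N y = N y') : y = y' := by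
  rcases lt_trichotomy j k with h | h | h
  · exact absurd hN (H.N_mono h hy hy').ne
  · subst h; exact (H.step j).inj y hy y' hy' hN
  · exact absurd hN (H.N_mono h hy' hy).ne'

lemma IsTower.nonempty (H : IsTower z N T Y) (k : ℕ) : ∃ y, y ∈ Y k := by
  obtain ⟨y, hy, -⟩ := (H.step k).approx z (H.mem k) 0
  exact ⟨y, hy⟩

lemma IsTower.isolated (H : IsTower z N T Y) {k : ℕ} {y : X} (hy : y ∈ Y k) :
    ∃ ε > 0, ∀ j, ∀ y' ∈ Y j, y' ≠ y → ε ≤ (N y' - N y) ^ 2 := by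
  classical
  have hfin : ∃ ε > 0, ∀ y' ∈ (T (k + 2)).filter (fun y' => N y' ≠ N y), ε ≤ (N y' - N y) ^ 2 := by
    rcases ((T (k + 2)).filter (fun y' => N y' ≠ N y)).eq_empty_or_nonempty with h | h
    · exact ⟨1, one_pos, by rw [h]; simp⟩
    · obtain ⟨y0, h0, h1⟩ := Finset.exists_min_image _ (fun y' => (N y' - N y) ^ 2) h
      refine ⟨_, ?_, h1⟩
      have := sub_ne_zero.2 (Finset.mem_filter.1 h0).2
      show 0 < (N y0 - N y) ^ 2
      positivity
  obtain ⟨ε, hε, h1⟩ := hfin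
  obtain ⟨y1, hy1⟩ := H.nonempty (k + 1)
  have hlt := H.N_mono (Nat.lt_succ_self k) hy hy1
  refine ⟨ε, hε, fun j y' hy' hne => ?_⟩
  have m1 := h1 y1 (Finset.mem_filter.2 ⟨H.subY (k + 1) hy1, hlt.ne'⟩)
  rcases lt_or_ge j (k + 2) with hj | hj
  · exact h1 y' (Finset.mem_filter.2 ⟨H.subset hj (H.subY j hy'), fun h => hne (H.N_inj hy' hy h)⟩)
  · have := H.N_mono hj hy1 hy'
    nlinarith

/-- the lifted point -/
noncomputable def lift (f : X →L[ℝ] ℝ) (z : X) (N : X → ℝ) (y : X) : X :=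
  y - f y • z + (N y) ^ 2 • z

/-- the set -/
def theB (f : X →L[ℝ] ℝ) (z : X) (N : X → ℝ) (Y : ℕ → Finset X) : Set X :=
  {b | ∃ k, ∃ y ∈ Y k, b = lift f z N y}

lemma theB_bounded (H : IsTower z N T Y) (f : X →L[ℝ] ℝ) : IsBounded (theB f z N Y) := by
  refine (Metric.isBounded_closedBall (x := (0 : X)) (r := 1 + ‖f‖ + 1)).subset ?_
  rintro b ⟨k, y, hy, rfl⟩
  rw [mem_closedBall_zero_iff, lift]
  have h1 := (H.step k).norm_le y hy
  have h2 := f.le_opNorm y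
  have h3 := H.N_pos hy
  have h4 := (H.step k).lt_one y hy
  have e1 := norm_add_le (y - f y • z) ((N y) ^ 2 • z)
  have e2 := norm_sub_le y (f y • z)
  rw [norm_smul, H.hz] at e1 e2
  have e3 : ‖(N y) ^ 2‖ ≤ 1 := by
    rw [Real.norm_of_nonneg (by positivity)]; nlinarith
  nlinarith [norm_nonneg f, norm_nonneg y]

lemma theB_scd (H : IsTower z N T Y) (f : X →L[ℝ] ℝ) (hf : f z = 1) : IsSCD (theB f z N Y) := by
  have hcount : (theB f z N Y).Countable := by
    have : theB f z N Y = ⋃ k, (lift f z N) '' (Y k : Set X) := by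
      ext b; simp [theB, eq_comm]
    rw [this]
    exact countable_iUnion fun k => (Finset.countable_toSet _).image _
  have hne : (theB f z N Y).Nonempty := by
    obtain ⟨y, hy⟩ := H.nonempty 0
    exact ⟨_, 0, y, hy, rfl⟩
  obtain ⟨b, hb⟩ := hcount.exists_eq_range hne
  refine ⟨fun n => {b n}, fun n => ?_, fun B' hB' => ?_⟩
  · refine ⟨singleton_nonempty _, ?_⟩
    have hbn : b n ∈ theB f z N Y := hb ▸ mem_range_self n
    obtain ⟨k, y, hy, hby⟩ := hbn
    simp only [hby]
    obtain ⟨g, gz, gy, gN⟩ := H.qn.dual y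
    obtain ⟨ε, hε, hiso⟩ := H.isolated hy
    have hr := H.N_pos hy
    set r := N y with hrdef
    have val : ∀ y', (g - (1 / (2 * r)) • f) (lift f z N y') = g y' - (1 / (2 * r)) * (N y') ^ 2 := by
      intro y'
      simp [lift, gz, hf]
    have valy : (g - (1 / (2 * r)) • f) (lift f z N y) = r / 2 := by
      rw [val, gy, ← hrdef]; field_simp; ring
    have upper : ∀ y', (g - (1 / (2 * r)) • f) (lift f z N y') ≤ r / 2 - (N y' - r) ^ 2 / (2 * r) := by
      intro y'
      rw [val]
      have : r / 2 - (N y' - r) ^ 2 / (2 * r) = N y' - (1 / (2 * r)) * (N y') ^ 2 := by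
        field_simp; ring
      rw [this]
      linarith [gN y']
    have hmem : lift f z N y ∈ theB f z N Y := ⟨k, y, hy, rfl⟩
    have hsup : sSup ((g - (1 / (2 * r)) • f) '' theB f z N Y) = r / 2 := by
      apply IsGreatest.csSup_eq
      refine ⟨⟨_, hmem, valy⟩, ?_⟩
      rintro _ ⟨_, ⟨j, y', hy', rfl⟩, rfl⟩
      refine (upper y').trans ?_
      have : 0 ≤ (N y' - r) ^ 2 / (2 * r) := by positivity
      linarith
    refine ⟨g - (1 / (2 * r)) • f, ?_, ε / (2 * r), by positivity, ?_⟩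
    · intro h0
      rw [h0] at valy
      simp at valy
      linarith
    · ext x
      simp only [mem_singleton_iff, sliceSet, mem_ofPred_eq, hsup]
      constructor
      · rintro rfl
        refine ⟨hmem, ?_⟩
        rw [valy]
        have : 0 < ε / (2 * r) := by positivity
        linarith
      · rintro ⟨⟨j, y', hy', rfl⟩, hlt⟩
        by_contra hne
        have hyy : y' ≠ y := fun h => hne (by rw [h])
        have h1 := hiso j y' hy' hyy
        have h2 := upper y'
        have h3 : ε / (2 * r) ≤ (N y' - r) ^ 2 / (2 * r) := by gcongr
        linarith
  · have : theB f z N Y ⊆ B' := by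
      rw [hb]
      rintro _ ⟨n, rfl⟩
      obtain ⟨x, hx, hx2⟩ := hB' n
      rw [mem_singleton_iff] at hx2
      rwa [← hx2]
    exact this.trans ((subset_convexHull ℝ _).trans subset_closure)

lemma slice_freq (H : IsTower z N T Y) (f : X →L[ℝ] ℝ) {S : Set X}
    (hS : IsSlice (theB f z N Y ∪ -theB f z N Y) S) :
    ∃ᶠ k in Filter.atTop, 1 ≤ k ∧ ∃ y ∈ Y k, lift f z N y ∈ S ∨ -lift f z N y ∈ S := by
  obtain ⟨⟨a, ha⟩, G, -, ε, hε, rfl⟩ := hS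
  set A := theB f z N Y ∪ -theB f z N Y with hA
  obtain ⟨haA, haG⟩ := ha
  -- the functional `G ∘ P`
  set GP : X →L[ℝ] ℝ := G - (G z) • f with hGP
  have hlift : ∀ y, G (lift f z N y) = GP y + (N y) ^ 2 * G z := by
    intro y; simp [lift, hGP]; ring
  obtain ⟨m, y, hy, hya⟩ : ∃ m, ∃ y ∈ Y m, G a ≤ |GP y| + |G z| := by
    have key : ∀ m, ∀ y ∈ Y m, |G (lift f z N y)| ≤ |GP y| + |G z| := by
      intro m y hy
      rw [hlift]
      refine (abs_add_le _ _).trans ?_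
      have h3 := H.N_pos hy
      have h4 := (H.step m).lt_one y hy
      rw [abs_mul, abs_of_nonneg (by positivity : 0 ≤ (N y) ^ 2)]
      have : (N y) ^ 2 ≤ 1 := by nlinarith
      nlinarith [abs_nonneg (G z)]
    rcases haA with ⟨m, y, hy, h⟩ | ⟨m, y, hy, h⟩
    · exact ⟨m, y, hy, by rw [h]; exact (le_abs_self _).trans (key m y hy)⟩
    · refine ⟨m, y, hy, ?_⟩
      have : a = -lift f z N y := by rw [← h, neg_neg]
      rw [this, map_neg]; exact (neg_le_abs _).trans (key m y hy)
  -- small parameter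
  set C := ‖GP‖ + 2 * |G z| with hC
  have hC0 : 0 ≤ C := by positivity
  have hlim : Filter.Tendsto (fun k : ℕ => ((1 / 2 : ℝ) ^ (k + 2)) * C) Filter.atTop (nhds 0) := by
    have h1 : Filter.Tendsto (fun k : ℕ => (1 / 2 : ℝ) ^ (k + 2)) Filter.atTop (nhds 0) :=
      (tendsto_pow_atTop_nhds_zero_of_lt_one (by norm_num) (by norm_num)).comp (Filter.tendsto_add_atTop_nat 2)
    simpa using h1.mul_const C
  have hpos : 0 < G a - (sSup (G '' A) - ε) := by linarith
  have hev := (hlim.eventually (gt_mem_nhds hpos)).and (Filter.eventually_ge_atTop (m + 1))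
  apply Filter.Eventually.frequently
  filter_upwards [hev] with k hk
  obtain ⟨hk1, hk2⟩ := hk
  refine ⟨by omega, ?_⟩
  have hyT : y ∈ T k := H.subset hk2 (H.subY m hy)
  set δ := (1 / 2 : ℝ) ^ (k + 2) with hδ
  have hδ0 : 0 < δ := by positivity
  have hδ1 : δ ≤ 1 := pow_le_one₀ (by norm_num) (by norm_num)
  have sq : ∀ y' ∈ Y k, (1 - 2 * δ) * |G z| ≤ (N y') ^ 2 * |G z| := by
    intro y' hy'
    have := (H.step k).gt y' hy'
    have h2 := H.N_pos hy'
    apply mul_le_mul_of_nonneg_right _ (abs_nonneg _)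
    nlinarith
  rcases le_total 0 (G z) with hGz | hGz
  · obtain ⟨y', hy', h1⟩ := (H.step k).approx y hyT GP
    refine ⟨y', hy', Or.inl ⟨Or.inl ⟨k, y', hy', rfl⟩, ?_⟩⟩
    have h2 := sq y' hy'
    rw [hlift]
    rw [abs_of_nonneg hGz] at *
    nlinarith
  · obtain ⟨y', hy', h1⟩ := (H.step k).approx' y hyT GP
    refine ⟨y', hy', Or.inr ⟨Or.inr ⟨k, y', hy', by rw [neg_neg]⟩, ?_⟩⟩
    have h2 := sq y' hy'
    rw [map_neg, hlift]
    rw [abs_of_nonpos hGz] at *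
    nlinarith

lemma l1_lower (H : IsTower z N T Y) {φ : ℕ → ℕ} (hφ : StrictMono φ) (h1 : ∀ n, 1 ≤ φ n)
    {y : ℕ → X} (hy : ∀ n, y n ∈ Y (φ n)) (v : X) (hv : v ∈ Submodule.span ℝ (T 1 : Set X))
    (a : ℕ → ℝ) (n : ℕ) :
    (1 / 2 + (1 / 2) ^ (n + 1)) * ‖v‖ ≤ ‖v + ∑ i ∈ Finset.range n, a i • y i‖ := by
  induction n with
  | zero => simp; linarith [norm_nonneg v]
  | succ n ih =>
    rw [Finset.sum_range_succ, ← add_assoc]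
    have hw : v + ∑ i ∈ Finset.range n, a i • y i ∈ Submodule.span ℝ (T (φ n) : Set X) := by
      apply Submodule.add_mem
      · exact Submodule.span_mono (by exact_mod_cast H.subset (h1 n)) hv
      · apply Submodule.sum_mem
        intro i hi
        apply Submodule.smul_mem
        apply Submodule.subset_span
        exact H.subset (hφ (Finset.mem_range.1 hi)) (H.subY _ (hy i))
    have h2 := (H.step (φ n)).orth _ (hy n) _ hw (a n)
    refine le_trans ?_ h2
    have h3 : (1 / 2 : ℝ) ^ (φ n + 2) ≤ (1 / 2) ^ (n + 2) :=
      pow_le_pow_of_le_one (by norm_num) (by norm_num) (by have := hφ.id_le n; simp at this; omega)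
    have h4 : (1 / 2 : ℝ) ^ (n + 2) ≤ 1 / 4 := by
      have : (1 / 2 : ℝ) ^ (n + 2) ≤ (1 / 2) ^ 2 :=
        pow_le_pow_of_le_one (by norm_num) (by norm_num) (by omega)
      linarith
    have h5 : (1 / 2 : ℝ) ^ (n + 1) = 2 * (1 / 2) ^ (n + 2) := by ring
    have h6 : (1 / 2 : ℝ) ^ (n + 1 + 1) = (1 / 2) ^ (n + 2) := by ring
    rw [h5] at ih
    rw [h6]
    set q := (1 / 2 : ℝ) ^ (n + 2)
    have hq : 0 < q := by positivity
    have h7 : (1 - q) * ((1 / 2 + 2 * q) * ‖v‖) ≤ (1 - (1 / 2) ^ (φ n + 2)) * ‖v + ∑ i ∈ Finset.range n, a i • y i‖ := by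
      apply mul_le_mul (by linarith) ih (by positivity) (by linarith)
    refine le_trans ?_ h7
    rw [← mul_assoc]
    apply mul_le_mul_of_nonneg_right _ (norm_nonneg _)
    nlinarith

lemma theB_not_scd (H : IsTower z N T Y) (f : X →L[ℝ] ℝ) :
    ¬ IsSCD (theB f z N Y ∪ -theB f z N Y) := by
  rintro ⟨V, hV, hdet⟩
  obtain ⟨φ, hφ, hφ2⟩ := Filter.extraction_forall_of_frequently (fun n => slice_freq H f (hV n))
  choose h1 y hy hyV using hφ2
  let S : Submodule ℝ X := Submodule.span ℝ {z} ⊔ Submodule.span ℝ (range y)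
  have hzS : z ∈ S := Submodule.mem_sup_left (Submodule.mem_span_singleton_self z)
  have hyS : ∀ n, y n ∈ S := fun n => Submodule.mem_sup_right (Submodule.subset_span (mem_range_self n))
  have hlS : ∀ n, lift f z N (y n) ∈ S := fun n =>
    S.add_mem (S.sub_mem (hyS n) (S.smul_mem _ hzS)) (S.smul_mem _ hzS)
  have hsub := hdet (S : Set X) (fun n => by
    rcases hyV n with h | h
    · exact ⟨_, hlS n, h⟩
    · exact ⟨_, S.neg_mem (hlS n), h⟩)
  rw [S.convex.convexHull_eq] at hsub
  obtain ⟨y0, hy0⟩ := H.nonempty 0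
  have hb0 : lift f z N y0 ∈ closure (S : Set X) := hsub (Or.inl ⟨0, y0, hy0, rfl⟩)
  have hpos := H.N_pos hy0
  obtain ⟨s, hs, hs2⟩ := Metric.mem_closure_iff.1 hb0 (N y0 / 2) (by linarith)
  obtain ⟨s1, hs1, s2, hs2', rfl⟩ := Submodule.mem_sup.1 hs
  obtain ⟨α, rfl⟩ := Submodule.mem_span_singleton.1 hs1
  obtain ⟨c, rfl⟩ := (Finsupp.mem_span_range_iff_exists_finsupp).1 hs2'
  -- rewrite as a range sum
  obtain ⟨n, hn⟩ : ∃ n, c.support ⊆ Finset.range n := c.support.exists_nat_subset_range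
  have hsum : (c.sum fun i a => a • y i) = ∑ i ∈ Finset.range n, c i • y i := by
    rw [Finsupp.sum]
    apply Finset.sum_subset hn
    intro i _ hi
    rw [Finsupp.notMem_support_iff.1 hi, zero_smul]
  rw [hsum, dist_eq_norm] at hs2
  set β := -f y0 + (N y0) ^ 2 - α with hβ
  have e1 : lift f z N y0 - (α • z + ∑ i ∈ Finset.range n, c i • y i)
      = (y0 + β • z) + ∑ i ∈ Finset.range n, (-c i) • y i := by
    simp only [neg_smul, Finset.sum_neg_distrib, lift, hβ]
    module
  rw [e1] at hs2
  have hv : y0 + β • z ∈ Submodule.span ℝ (T 1 : Set X) :=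
    Submodule.add_mem _ (Submodule.subset_span (H.subY 0 hy0))
      (Submodule.smul_mem _ _ (Submodule.subset_span (H.mem 1)))
  have h3 := l1_lower H hφ h1 hy _ hv (fun i => -c i) n
  have h4 : N y0 ≤ ‖y0 + β • z‖ := by
    obtain ⟨g, gz, gy, gN⟩ := H.qn.dual y0
    have h5 := gN (y0 + β • z)
    have h6 := H.qn.le (y0 + β • z)
    have h7 : g (y0 + β • z) = N y0 := by simp [gz, gy]
    linarith
  have h8 : (0 : ℝ) < (1 / 2) ^ (n + 1) := by positivity
  nlinarith [norm_nonneg (y0 + β • z)]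

end tower

theorem exists_scd_set_union_neg_not_scd
    {X : Type*} [NormedAddCommGroup X] [NormedSpace ℝ X] [CompleteSpace X]
    (h : DaugavetProperty X) :
    ∃ B : Set X, IsBounded B ∧ IsSCD B ∧ ¬ IsSCD (B ∪ -B) := by
  have hnt : ∃ x : X, x ≠ 0 := by
    by_contra hcon
    push Not at hcon
    have h1 := h 0 0
    have h2 : ContinuousLinearMap.id ℝ X = 0 := by
      ext x; simp [hcon x]
    rw [h2] at h1
    simp at h1
  obtain ⟨x, hx⟩ := hnt
  have hz : ‖‖x‖⁻¹ • x‖ = 1 := by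
    rw [norm_smul, norm_inv, norm_norm]
    exact inv_mul_cancel₀ (norm_ne_zero_iff.2 hx)
  obtain ⟨f, -, hf⟩ := exists_dual_vector'' ℝ (‖x‖⁻¹ • x)
  rw [hz] at hf
  obtain ⟨N, T, Y, H⟩ := exists_tower h _ hz
  exact ⟨theB f _ N Y, theB_bounded H f, theB_scd H f (by simpa using hf), theB_not_scd H f⟩
end

section
/- Let X be a real Banach space and let U, V ⊂ X be nonempty bounded sets. Suppose there exist a nonzero continuous linear functional x₀* on X, a real number c, and ε₀ > 0 such that U ⊂ {x ∈ X : x₀*(x) = c} and V ⊂ {x ∈ X : x₀*(x) < c − ε₀}. Then every slice of U is at the same time a slice of U ∪ V; that is, for every nonzero continuous linear functional x* on X and ε > 0 there exist a nonzero continuous linear functional y* on X and δ > 0 with S(U ∪ V, y*, δ) = S(U, x*, ε). -/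
open Bornology Set Pointwise

variable {X : Type*} [NormedAddCommGroup X] [NormedSpace ℝ X]

theorem slice_of_hyperplane_part_is_slice_of_union
    {X : Type*} [NormedAddCommGroup X] [NormedSpace ℝ X] [CompleteSpace X]
    (U V : Set X) (hU : U.Nonempty) (hUb : IsBounded U)
    (hV : V.Nonempty) (hVb : IsBounded V)
    (x₀ : X →L[ℝ] ℝ) (hx₀ : x₀ ≠ 0) (c : ℝ) (ε₀ : ℝ) (hε₀ : 0 < ε₀)
    (hUH : ∀ x ∈ U, x₀ x = c) (hVH : ∀ x ∈ V, x₀ x < c - ε₀) :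
    ∀ (f : X →L[ℝ] ℝ), f ≠ 0 → ∀ ε : ℝ, 0 < ε →
      ∃ (g : X →L[ℝ] ℝ), g ≠ 0 ∧ ∃ δ : ℝ, 0 < δ ∧
        sliceSet (U ∪ V) g δ = sliceSet U f ε := by
  intro f hf ε hε
  have hfU : BddAbove (f '' U) := (f.lipschitz.isBounded_image hUb).bddAbove
  have hfV : BddAbove (f '' V) := (f.lipschitz.isBounded_image hVb).bddAbove
  obtain ⟨M, hM⟩ := hfV
  set s := sSup (f '' U) with hs
  have hlub : IsLUB (f '' U) s := isLUB_csSup (hU.image f) hfU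
  obtain ⟨t, ht0, ht⟩ : ∃ t : ℝ, 0 ≤ t ∧ M - s + ε ≤ t * ε₀ := by
    refine ⟨|M - s + ε| / ε₀, by positivity, ?_⟩
    rw [div_mul_cancel₀ _ hε₀.ne']
    exact le_abs_self _
  have hgU : ∀ x ∈ U, (f + t • x₀) x = f x + t * c := by
    intro x hx
    simp [hUH x hx]
  have hgV : ∀ x ∈ V, (f + t • x₀) x ≤ s + t * c - ε := by
    intro x hx
    have h1 : f x ≤ M := hM (mem_image_of_mem f hx)
    have h2 : t * x₀ x ≤ t * (c - ε₀) := mul_le_mul_of_nonneg_left (hVH x hx).le ht0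
    have h3 : (f + t • x₀) x = f x + t * x₀ x := by simp
    rw [h3]
    linarith
  have hlubg : IsLUB ((f + t • x₀) '' (U ∪ V)) (s + t * c) := by
    constructor
    · rintro _ ⟨x, hx | hx, rfl⟩
      · rw [hgU x hx]
        have := hlub.1 (mem_image_of_mem f hx)
        linarith
      · linarith [hgV x hx]
    · intro b hb
      have : s ≤ b - t * c := by
        apply hlub.2
        rintro _ ⟨x, hx, rfl⟩
        have := hb (mem_image_of_mem _ (Or.inl hx : x ∈ U ∪ V))
        rw [hgU x hx] at this
        linarith
      linarith
  have hsup := hlubg.csSup_eq ((hU.mono subset_union_left).image _)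
  refine ⟨f + t • x₀, ?_, ε, hε, ?_⟩
  · intro h0
    obtain ⟨v, hv⟩ := hV
    have h1 := hgV v hv
    have h2 : s + t * c ≤ 0 := by
      apply hlubg.2
      rintro _ ⟨x, _, rfl⟩
      simp [h0]
    have h3 : (f + t • x₀) v = 0 := by rw [h0]; rfl
    linarith
  · ext x
    simp only [sliceSet, mem_setOf_eq, hsup, ← hs]
    constructor
    · rintro ⟨hx | hx, h⟩
      · rw [hgU x hx] at h
        exact ⟨hx, by linarith⟩
      · exact absurd h (not_lt.2 (hgV x hx))
    · rintro ⟨hx, h⟩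
      refine ⟨Or.inl hx, ?_⟩
      rw [hgU x hx]
      linarith
end

section
/- Let X be a real Banach space and let U, V ⊂ X be nonempty bounded sets. Suppose there exist a nonzero continuous linear functional x₀* on X, a real number c, and ε₀ > 0 such that U ⊂ {x ∈ X : x₀*(x) = c} and V ⊂ {x ∈ X : x₀*(x) < c − ε₀}. If U ∪ V is SCD, then U is SCD. -/
open Bornology Set Pointwise

variable {X : Type*} [NormedAddCommGroup X] [NormedSpace ℝ X]

theorem isSCD_of_union_isSCD_hyperplane
    {X : Type*} [NormedAddCommGroup X] [NormedSpace ℝ X] [CompleteSpace X]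
    (U V : Set X) (hU : U.Nonempty) (hUb : IsBounded U)
    (hV : V.Nonempty) (hVb : IsBounded V)
    (x₀ : X →L[ℝ] ℝ) (hx₀ : x₀ ≠ 0) (c : ℝ) (ε₀ : ℝ) (hε₀ : 0 < ε₀)
    (hUH : ∀ x ∈ U, x₀ x = c) (hVH : ∀ x ∈ V, x₀ x < c - ε₀)
    (hUV : IsSCD (U ∪ V)) :
    IsSCD U := by
  classical
  obtain ⟨S, hS, hdet⟩ := hUV
  refine ⟨fun n => if (U ∩ S n).Nonempty then U ∩ S n else U, ?_, ?_⟩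
  · intro n
    dsimp only
    split_ifs with h
    · obtain ⟨_, f, hf, ε, hε, hSn⟩ := hS n
      refine ⟨h, f, hf, sSup (f '' U) - sSup (f '' (U ∪ V)) + ε, ?_, ?_⟩
      · obtain ⟨x, hxU, hxS⟩ := h
        rw [hSn] at hxS
        have h1 : f x ≤ sSup (f '' U) := by
          apply le_csSup
          · exact (f.lipschitz.isBounded_image hUb).bddAbove
          · exact mem_image_of_mem _ hxU
        have := hxS.2
        linarith
      · ext x
        rw [hSn]
        simp only [sliceSet, mem_inter_iff, mem_union, mem_setOf_eq]
        constructor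
        · rintro ⟨h1, _, h3⟩
          exact ⟨h1, by linarith⟩
        · rintro ⟨h1, h3⟩
          exact ⟨h1, Or.inl h1, by linarith⟩
    · refine ⟨hU, x₀, hx₀, 1, one_pos, ?_⟩
      have himg : x₀ '' U = {c} := by
        ext t
        constructor
        · rintro ⟨x, hx, rfl⟩
          exact hUH x hx
        · rintro rfl
          obtain ⟨x, hx⟩ := hU
          exact ⟨x, hx, hUH x hx⟩
      ext x
      simp only [sliceSet, himg, csSup_singleton, mem_setOf_eq]
      constructor
      · intro hx
        exact ⟨hx, by rw [hUH x hx]; linarith⟩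
      · exact fun hx => hx.1
  · intro B hB
    have hB'ne : (B ∩ U).Nonempty := by
      obtain ⟨x, hxB, hx⟩ := hB 0
      dsimp only at hx
      split_ifs at hx with h
      · exact ⟨x, hxB, hx.1⟩
      · exact ⟨x, hxB, hx⟩
    have hsub : U ∪ V ⊆ closure (convexHull ℝ ((B ∩ U) ∪ V)) := by
      apply hdet
      intro n
      obtain ⟨x, hxB, hx⟩ := hB n
      dsimp only at hx
      split_ifs at hx with h
      · exact ⟨x, Or.inl ⟨hxB, hx.1⟩, hx.2⟩
      · obtain ⟨⟨y, hy⟩, f, hf, ε, hε, hSn⟩ := hS n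
        have hy' : y ∈ U ∪ V := by
          rw [hSn] at hy
          exact hy.1
        rcases hy' with hyU | hyV
        · exact absurd ⟨y, hyU, hy⟩ h
        · exact ⟨y, Or.inr hyV, hy⟩
    obtain ⟨M, hM⟩ := Metric.isBounded_iff.1 (isBounded_convexHull.2 (hUb.union hVb))
    intro u hu
    rw [Metric.mem_closure_iff]
    intro η hη
    have hM0 : 0 ≤ M := by
      have h := hM (subset_convexHull ℝ _ (Or.inl hu)) (subset_convexHull ℝ _ (Or.inl hu))
      simpa using h
    set K := 1 + M * ‖x₀‖ / ε₀ with hK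
    have hKpos : 0 < K := by positivity
    obtain ⟨y, hy, hyu⟩ := Metric.mem_closure_iff.1 (hsub (Or.inl hu)) (η / K) (by positivity)
    rw [convexHull_union hB'ne hV, mem_convexJoin] at hy
    obtain ⟨b, hb, v, hv, hseg⟩ := hy
    obtain ⟨s, t, hs, ht, hst, rfl⟩ := hseg
    refine ⟨b, convexHull_mono inter_subset_left hb, ?_⟩
    have hbv := hM (convexHull_mono (inter_subset_right.trans subset_union_left) hb)
      (convexHull_mono subset_union_right hv)
    have hxb : x₀ b = c := by
      have : convexHull ℝ (B ∩ U) ⊆ {x | x₀ x = c} :=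
        convexHull_min (fun x hx => hUH x hx.2)
          (convex_hyperplane x₀.toLinearMap.isLinear c)
      exact this hb
    have hxv : x₀ v < c - ε₀ := by
      have : convexHull ℝ V ⊆ {x | x₀ x < c - ε₀} :=
        convexHull_min (fun x hx => hVH x hx)
          (convex_halfSpace_lt x₀.toLinearMap.isLinear _)
      exact this hv
    have h1 : t * ε₀ ≤ ‖x₀‖ * dist u (s • b + t • v) := by
      have h2 := (le_abs_self _).trans (x₀.le_opNorm (u - (s • b + t • v)))
      rw [← dist_eq_norm] at h2
      simp only [map_sub, map_add, map_smul, smul_eq_mul, hxb, hUH u hu] at h2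
      obtain rfl : s = 1 - t := by linarith
      nlinarith
    have h2 : dist (s • b + t • v) b = t * dist b v := by
      obtain rfl : s = 1 - t := by linarith
      rw [dist_eq_norm, dist_comm, dist_eq_norm,
        show (1 - t) • b + t • v - b = t • (v - b) by module, norm_smul,
        Real.norm_of_nonneg ht]
    set d := dist u (s • b + t • v) with hd
    have h3 : t ≤ ‖x₀‖ * d / ε₀ := (le_div_iff₀ hε₀).2 h1
    calc dist u b ≤ d + dist (s • b + t • v) b := dist_triangle _ _ _
      _ ≤ d + (‖x₀‖ * d / ε₀) * M := by
        rw [h2]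
        gcongr
      _ = d * K := by rw [hK]; ring
      _ < η := (lt_div_iff₀ hKpos).1 hyu
end

section
/- Let Y be a real Banach space with the Daugavet property. Then there exist convex, closed, bounded, symmetric (i.e., B = −B) SCD sets B₁, B₂ ⊂ Y such that the union B₁ ∪ B₂ is not SCD. -/
open Bornology Set Pointwise

variable {X : Type*} [NormedAddCommGroup X] [NormedSpace ℝ X]

lemma scd_of_exposed {ι Y : Type*} [Countable ι] [Nonempty ι] [NormedAddCommGroup Y]
    [NormedSpace ℝ Y] (P : ι → Y) (M : ℝ) (Mpos : 0 < M) (hM : ∀ i, ‖P i‖ ≤ M)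
    (hP : ∀ i, ∃ g : Y →L[ℝ] ℝ, ∃ γ : ℝ, 0 < γ ∧ g ≠ 0 ∧
      (∀ j, P j ≠ P i → g (P j) ≤ g (P i) - γ)) :
    IsSCD (closure (convexHull ℝ (range P))) := by
  choose g γ hγ g0 h1 using hP
  set A := closure (convexHull ℝ (range P)) with hA
  have memP : ∀ i, P i ∈ A := fun i =>
    subset_closure (subset_convexHull ℝ _ ⟨i, rfl⟩)
  have key : ∀ i, ∀ x ∈ A, γ i * ‖x - P i‖ + (2 * M) * g i x ≤ (2 * M) * g i (P i) := by
    intro i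
    have hcl : IsClosed {x : Y | γ i * ‖x - P i‖ + (2 * M) * g i x ≤ (2 * M) * g i (P i)} :=
      isClosed_le (by fun_prop) (by fun_prop)
    have hcv : Convex ℝ {x : Y | γ i * ‖x - P i‖ + (2 * M) * g i x ≤ (2 * M) * g i (P i)} := by
      intro x hx y hy a b ha hb hab
      simp only [Set.mem_ofPred_eq] at *
      have e : a • x + b • y - P i = a • (x - P i) + b • (y - P i) := by
        rw [smul_sub, smul_sub]
        have : P i = a • P i + b • P i := by rw [← add_smul, hab, one_smul]
        nth_rewrite 1 [this]
        abel
      have n1 : ‖a • x + b • y - P i‖ ≤ a * ‖x - P i‖ + b * ‖y - P i‖ := by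
        rw [e]
        refine (norm_add_le _ _).trans ?_
        rw [norm_smul, norm_smul, Real.norm_of_nonneg ha, Real.norm_of_nonneg hb]
      have n2 := mul_le_mul_of_nonneg_left n1 (hγ i).le
      have n3 := mul_le_mul_of_nonneg_left hx ha
      have n4 := mul_le_mul_of_nonneg_left hy hb
      simp only [map_add, map_smul, smul_eq_mul]
      have hb' : b = 1 - a := by linarith
      subst hb'
      nlinarith
    have hsub : range P ⊆
        {x : Y | γ i * ‖x - P i‖ + (2 * M) * g i x ≤ (2 * M) * g i (P i)} := by
      rintro x ⟨j, rfl⟩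
      rw [Set.mem_ofPred_eq]
      by_cases hij : P j = P i
      · rw [hij]; simp
      · have hg := h1 i j hij
        have : ‖P j - P i‖ ≤ 2 * M := by linarith [norm_sub_le (P j) (P i), hM i, hM j]
        nlinarith [mul_le_mul_of_nonneg_left this (hγ i).le,
          mul_le_mul_of_nonneg_left hg (by linarith : 0 ≤ 2 * M)]
    exact fun x hx => closure_minimal (convexHull_min hsub hcv) hcl hx
  have hsup : ∀ i, sSup (g i '' A) = g i (P i) := by
    intro i
    apply IsGreatest.csSup_eq
    refine ⟨⟨_, memP i, rfl⟩, ?_⟩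
    rintro _ ⟨x, hx, rfl⟩
    have := key i x hx
    have h3 := mul_nonneg (hγ i).le (norm_nonneg (x - P i))
    have h4 : (2 * M) * g i x ≤ (2 * M) * g i (P i) := by linarith
    exact le_of_mul_le_mul_left h4 (by linarith)
  obtain ⟨e, he⟩ := exists_surjective_nat (ι × ℕ)
  refine ⟨fun n => sliceSet A (g (e n).1) (1 / ((e n).2 + 1 : ℝ)), ?_, ?_⟩
  · intro n
    have hp : (0:ℝ) < 1 / ((e n).2 + 1 : ℝ) := by positivity
    refine ⟨⟨P (e n).1, memP _, ?_⟩, g (e n).1, g0 _, _, hp, rfl⟩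
    rw [hsup]; linarith
  · intro B hB
    have hPB : ∀ i, P i ∈ closure B := by
      intro i
      rw [Metric.mem_closure_iff]
      intro ε hε
      obtain ⟨k, hk⟩ := exists_nat_one_div_lt (show 0 < γ i * ε / (2 * M) by
        have := hγ i
        positivity)
      obtain ⟨n, hn⟩ := he (i, k)
      obtain ⟨b, hbB, hbA, hb⟩ := hB n
      simp only [hn] at hb
      rw [hsup] at hb
      refine ⟨b, hbB, ?_⟩
      have h3 := key i b hbA
      rw [lt_div_iff₀ (by linarith)] at hk
      rw [dist_comm, dist_eq_norm]
      have h4 : γ i * ‖b - P i‖ < γ i * ε := by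
        nlinarith
      exact lt_of_mul_lt_mul_left h4 (hγ i).le
    refine closure_minimal (convexHull_min ?_ (convex_convexHull ℝ B).closure) isClosed_closure
    rintro _ ⟨i, rfl⟩
    exact closure_mono (subset_convexHull ℝ B) (hPB i)

def DSet {ι Y : Type*} [NormedAddCommGroup Y] [NormedSpace ℝ Y] (P : ι → Y) : Set Y :=
  closure (convexHull ℝ (range P ∪ -range P))

lemma DSet_scd {ι Y : Type*} [Countable ι] [Nonempty ι] [NormedAddCommGroup Y] [NormedSpace ℝ Y]
    (P : ι → Y) (M : ℝ) (hM : ∀ i, ‖P i‖ ≤ M)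
    (hP : ∀ i, ∃ g : Y →L[ℝ] ℝ, ∃ γ : ℝ, 0 < γ ∧ (∀ j, P j ≠ P i → g (P j) ≤ g (P i) - γ) ∧
      ∀ j, -g (P j) ≤ g (P i) - γ) :
    Convex ℝ (DSet P) ∧ IsClosed (DSet P) ∧ IsBounded (DSet P) ∧ DSet P = -DSet P ∧
      IsSCD (DSet P) := by
  have hM0 : 0 ≤ M := (norm_nonneg _).trans (hM (Classical.arbitrary ι))
  refine ⟨(convex_convexHull ℝ _).closure, isClosed_closure, ?_, ?_, ?_⟩
  · refine IsBounded.closure ?_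
    rw [isBounded_convexHull]
    refine (Metric.isBounded_closedBall (x := (0:Y)) (r := M)).subset ?_
    rintro x (⟨i, rfl⟩ | ⟨i, hi⟩)
    · simpa using hM i
    · have := hM i
      rw [hi] at this
      simpa using this
  · unfold DSet
    rw [neg_closure, ← convexHull_neg, Set.union_neg, neg_neg, Set.union_comm]
  · have e : range P ∪ -range P = range (Sum.elim P (fun i => -P i)) := by
      ext x
      simp only [mem_union, Set.mem_neg, mem_range, Sum.exists, Sum.elim_inl, Sum.elim_inr]
      simp only [neg_eq_iff_eq_neg]
    unfold DSet
    rw [e]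
    refine scd_of_exposed _ (M + 1) (by linarith) ?_ ?_
    · rintro (i | i)
      · simpa using (hM i).trans (by linarith)
      · simpa using (hM i).trans (by linarith)
    · have gne : ∀ i (g : Y →L[ℝ] ℝ) (γ : ℝ), 0 < γ → -g (P i) ≤ g (P i) - γ → g ≠ 0 := by
        intro i g γ h1 h2 h0
        simp [h0] at h2
        linarith
      rintro (i | i)
      · obtain ⟨g, γ, h1, h2, h3⟩ := hP i
        refine ⟨g, γ, h1, gne i g γ h1 (h3 i), ?_⟩
        rintro (j | j) hj
        · exact h2 j hj
        · simpa using h3 j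
      · obtain ⟨g, γ, h1, h2, h3⟩ := hP i
        refine ⟨-g, γ, h1, neg_ne_zero.2 (gne i g γ h1 (h3 i)), ?_⟩
        rintro (j | j) hj
        · simpa using h3 j
        · simpa using h2 j (by simpa using hj)

/-- Daugavet type property of a subspace. -/
def Good {Y : Type*} [NormedAddCommGroup Y] [NormedSpace ℝ Y] (N : Submodule ℝ Y) : Prop :=
  ∀ (y : Y) (g : Y →L[ℝ] ℝ) (x : Y) (ε : ℝ), x ∈ N → ‖x‖ ≤ 1 → 0 < ε →
    ∃ z ∈ N, ‖z‖ ≤ 1 ∧ g x - ε < g z ∧ ‖y‖ + 1 - ε < ‖y - z‖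

lemma good_top {Y : Type*} [NormedAddCommGroup Y] [NormedSpace ℝ Y]
    (h : DaugavetProperty Y) : Good (⊤ : Submodule ℝ Y) := by
  have hnt : Nontrivial Y := by
    by_contra hn
    rw [not_nontrivial_iff_subsingleton] at hn
    have := h 0 0
    have e : (ContinuousLinearMap.id ℝ Y) = 0 := by
      ext x; exact Subsingleton.elim _ _
    simp [e] at this
  -- nonzero case
  have main : ∀ (y : Y) (g : Y →L[ℝ] ℝ) (ε : ℝ), y ≠ 0 → g ≠ 0 → 0 < ε →
      ∃ z : Y, ‖z‖ ≤ 1 ∧ ‖g‖ - ε < g z ∧ ‖y‖ + 1 - ε < ‖y - z‖ := by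
    intro y g ε hy hg hε
    have hG : 0 < ‖g‖ := norm_pos_iff.2 hg
    have hY : 0 < ‖y‖ := norm_pos_iff.2 hy
    set y' : Y := (-‖g‖⁻¹) • y with hy'
    have hn : ‖y'‖ = ‖g‖⁻¹ * ‖y‖ := by
      rw [hy', norm_smul, norm_neg, norm_inv, norm_norm]
    have hT := h g y'
    have hnT : ‖g.smulRight y'‖ = ‖y‖ := by
      rw [ContinuousLinearMap.norm_smulRight_apply, hn]
      field_simp
    rw [hnT] at hT
    obtain ⟨δ, hδ, hδ1, hδ2, hδ3⟩ : ∃ δ : ℝ, 0 < δ ∧ 2 * δ ≤ ε ∧ δ * ‖g‖ ≤ ε * ‖y‖ ∧ δ < 1 := by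
      refine ⟨min (min (ε / 2) (ε * ‖y‖ / ‖g‖)) (1/2), by positivity, ?_, ?_, ?_⟩
      · have := (min_le_left (min (ε / 2) (ε * ‖y‖ / ‖g‖)) (1/2)).trans (min_le_left _ _)
        linarith
      · have := (min_le_left (min (ε / 2) (ε * ‖y‖ / ‖g‖)) (1/2)).trans (min_le_right _ _)
        rwa [le_div_iff₀ hG] at this
      · have := (min_le_right (min (ε / 2) (ε * ‖y‖ / ‖g‖)) (1/2))
        linarith
    obtain ⟨z, hz1, hz2⟩ := ContinuousLinearMap.exists_lt_apply_of_lt_opNorm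
      (ContinuousLinearMap.id ℝ Y + g.smulRight y') (show 1 + ‖y‖ - δ < _ by rw [hT]; linarith)
    -- choose the sign
    obtain ⟨z, hz1, hz2, hz3⟩ : ∃ z : Y, ‖z‖ < 1 ∧ 1 + ‖y‖ - δ < ‖z + g z • y'‖ ∧ 0 ≤ g z := by
      rcases le_total 0 (g z) with h0 | h0
      · exact ⟨z, hz1, by simpa using hz2, h0⟩
      · refine ⟨-z, by simpa using hz1, ?_, by simpa using h0⟩
        have : -z + g (-z) • y' = -(z + g z • y') := by
          rw [map_neg, neg_smul, neg_add]
        rw [this, norm_neg]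
        simpa using hz2
    have hgz : g z ≤ ‖g‖ := by
      refine (le_abs_self _).trans ((g.le_opNorm z).trans ?_)
      nlinarith
    have a1 : ‖g z • y'‖ = g z * (‖g‖⁻¹ * ‖y‖) := by
      rw [norm_smul, Real.norm_of_nonneg hz3, hn]
    have a2 := norm_add_le z (g z • y')
    rw [a1] at a2
    have a3 : ‖y‖ - δ < g z * (‖g‖⁻¹ * ‖y‖) := by linarith
    have a4 : ‖g‖ * ‖y‖ - δ * ‖g‖ < g z * ‖y‖ := by
      have := mul_lt_mul_of_pos_right a3 hG
      have e : g z * (‖g‖⁻¹ * ‖y‖) * ‖g‖ = g z * ‖y‖ := by field_simp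
      rw [e] at this
      linarith
    refine ⟨z, hz1.le, ?_, ?_⟩
    · have : (‖g‖ - ε) * ‖y‖ < g z * ‖y‖ := by nlinarith
      exact lt_of_mul_lt_mul_right this hY.le
    · have e : z + g z • y' = -(y - z) + (‖g‖ - g z) • ((‖g‖⁻¹) • y) := by
        rw [hy', smul_smul, smul_smul, sub_mul, sub_smul, mul_inv_cancel₀ hG.ne', mul_neg, neg_smul,
          one_smul]
        abel
      rw [e] at hz2
      have b1 := norm_add_le (-(y - z)) ((‖g‖ - g z) • ((‖g‖⁻¹) • y))
      rw [norm_neg, norm_smul, norm_smul, Real.norm_of_nonneg (sub_nonneg.2 hgz), norm_inv,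
        norm_norm] at b1
      have e2 : (‖g‖ - g z) * (‖g‖⁻¹ * ‖y‖) = ‖y‖ - g z * (‖g‖⁻¹ * ‖y‖) := by
        field_simp
      rw [e2] at b1
      linarith
  have main2 : ∀ (y : Y) (g : Y →L[ℝ] ℝ) (ε : ℝ), y ≠ 0 → 0 < ε →
      ∃ z : Y, ‖z‖ ≤ 1 ∧ ‖g‖ - ε < g z ∧ ‖y‖ + 1 - ε < ‖y - z‖ := by
    intro y g ε hy hε
    by_cases hg : g = 0
    · obtain ⟨f, hf, -⟩ := exists_dual_vector ℝ y (norm_ne_zero_iff.2 hy)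
      obtain ⟨z, h1, h2, h3⟩ := main y f ε hy (by intro h0; simp [h0] at hf) hε
      exact ⟨z, h1, by simpa [hg] using hε, h3⟩
    · exact main y g ε hy hg hε
  intro y g x ε hx hx1 hε
  have hgx : g x ≤ ‖g‖ := by
    refine (le_abs_self _).trans ((g.le_opNorm x).trans ?_)
    nlinarith [norm_nonneg g]
  by_cases hy : y = 0
  · obtain ⟨w, hw⟩ := exists_ne (0:Y)
    obtain ⟨z, h1, h2, h3⟩ := main2 w g ε hw hε
    refine ⟨z, trivial, h1, by linarith, ?_⟩
    subst hy
    have := norm_sub_le w z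
    simp only [norm_zero, zero_sub, norm_neg]
    linarith
  · obtain ⟨z, h1, h2, h3⟩ := main2 y g ε hy hε
    exact ⟨z, trivial, h1, by linarith, h3⟩

set_option maxHeartbeats 400000 in
lemma good_inf_ker {Y : Type*} [NormedAddCommGroup Y] [NormedSpace ℝ Y]
    (N : Submodule ℝ Y) (hN : Good N) (f : Y →L[ℝ] ℝ) (u : Y) (hu : u ∈ N) (hfu : f u = 1) :
    Good (N ⊓ f.ker) := by
  intro y g x ε hx hx1 hε
  obtain ⟨g', hg', hgn⟩ := exists_extension_norm_eq (N ⊓ f.ker)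
    (g.comp (N ⊓ f.ker).subtypeL)
  set s := ‖g.comp (N ⊓ f.ker).subtypeL‖ with hs
  have hs0 : 0 ≤ s := by rw [hs]; exact ContinuousLinearMap.opNorm_nonneg _
  have hgg : ∀ w ∈ N ⊓ f.ker, g' w = g w := fun w hw => hg' ⟨w, hw⟩
  have hg's : ∀ w : Y, ‖w‖ ≤ 1 → g' w ≤ s := by
    intro w hw
    refine (le_abs_self _).trans ((g'.le_opNorm w).trans ?_)
    rw [hgn]; nlinarith
  have hgx : g x ≤ s := by rw [← hgg x hx]; exact hg's x hx1
  -- choice of the small parameter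
  obtain ⟨η, hη, hη1, hη2⟩ : ∃ η : ℝ, 0 < η ∧ η ≤ 1 ∧
      η * (10 + 4 * ‖f‖ + 10 * ‖u‖ + 10 * ‖u‖ * s) ≤ ε := by
    have hp : 0 < 10 + 4 * ‖f‖ + 10 * ‖u‖ + 10 * ‖u‖ * s := by positivity
    refine ⟨min 1 (ε / (10 + 4 * ‖f‖ + 10 * ‖u‖ + 10 * ‖u‖ * s)), by positivity, min_le_left _ _, ?_⟩
    have := min_le_right 1 (ε / (10 + 4 * ‖f‖ + 10 * ‖u‖ + 10 * ‖u‖ * s))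
    rwa [le_div_iff₀ hp] at this
  -- an almost norming element
  obtain ⟨x', hx', hx'1, hx's⟩ : ∃ x' ∈ N ⊓ f.ker, ‖x'‖ ≤ 1 ∧ s - η ^ 2 < g' x' := by
    by_cases h0 : s - η ^ 2 < 0
    · exact ⟨0, zero_mem _, by simp, by simpa using h0⟩
    push Not at h0
    obtain ⟨v, hv1, hv2⟩ := ContinuousLinearMap.exists_lt_apply_of_lt_opNorm
      (g.comp (N ⊓ f.ker).subtypeL) (show s - η ^ 2 < _ by rw [← hs]; nlinarith)
    rcases abs_cases ((g.comp (N ⊓ f.ker).subtypeL) v) with ⟨ha, -⟩ | ⟨ha, -⟩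
    · refine ⟨v, v.2, hv1.le, ?_⟩
      rw [Real.norm_eq_abs, ha, ← hg'] at hv2
      exact hv2
    · refine ⟨-v, neg_mem v.2, by rw [norm_neg]; exact hv1.le, ?_⟩
      rw [Real.norm_eq_abs, ha, ← hg'] at hv2
      simpa using hv2
  have hfx' : f x' = 0 := hx'.2
  have hη22 : 0 < η ^ 2 := by positivity
  obtain ⟨z1, hz1N, hz1, hz1g, hz1y⟩ := hN y (g' + η • f) x' (η ^ 2) hx'.1 hx'1 hη22
  obtain ⟨z2, hz2N, hz2, hz2g, hz2y⟩ := hN (y - z1) (g' - η • f) x' (η ^ 2) hx'.1 hx'1 hη22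
  simp only [_root_.add_apply, _root_.sub_apply,
    _root_.smul_apply, smul_eq_mul, hfx', mul_zero, add_zero, sub_zero] at hz1g hz2g
  have f1 : -(2 * η) ≤ f z1 := by
    have := hg's z1 hz1
    have : η * (-(2 * η)) ≤ η * f z1 := by nlinarith
    exact le_of_mul_le_mul_left this hη
  have f2 : f z2 ≤ 2 * η := by
    have := hg's z2 hz2
    have : η * f z2 ≤ η * (2 * η) := by nlinarith
    exact le_of_mul_le_mul_left this hη
  have ff : ∀ z : Y, ‖z‖ ≤ 1 → |f z| ≤ ‖f‖ := by
    intro z hz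
    refine (f.le_opNorm z).trans ?_
    nlinarith [norm_nonneg f]
  have g1 : s - 2 * η ^ 2 - η * ‖f‖ ≤ g' z1 := by
    nlinarith [(abs_le.1 (ff z1 hz1)).2]
  have g2 : s - 2 * η ^ 2 - η * ‖f‖ ≤ g' z2 := by
    nlinarith [(abs_le.1 (ff z2 hz2)).1]
  -- intermediate value
  obtain ⟨a, b, ha, hb, hab, hfz⟩ : ∃ a b : ℝ, 0 ≤ a ∧ 0 ≤ b ∧ a + b = 1 ∧
      |a * f z1 + b * f z2| ≤ 2 * η := by
    by_cases c1 : f z1 ≤ 2 * η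
    · exact ⟨1, 0, by norm_num, le_rfl, by norm_num, by simpa using abs_le.2 ⟨f1, c1⟩⟩
    by_cases c2 : -(2 * η) ≤ f z2
    · exact ⟨0, 1, le_rfl, by norm_num, by norm_num, by simpa using abs_le.2 ⟨c2, f2⟩⟩
    push Not at c1 c2
    have hd : 0 < f z1 - f z2 := by linarith
    refine ⟨-f z2 / (f z1 - f z2), f z1 / (f z1 - f z2), ?_, ?_, ?_, ?_⟩
    · exact div_nonneg (by linarith) hd.le
    · exact div_nonneg (by linarith) hd.le
    · field_simp; ring
    · have : -f z2 / (f z1 - f z2) * f z1 + f z1 / (f z1 - f z2) * f z2 = 0 := by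
        field_simp; ring
      rw [this]; simp; linarith
  set z := a • z1 + b • z2 with hz
  have hzN : z ∈ N := add_mem (N.smul_mem a hz1N) (N.smul_mem b hz2N)
  have cvx : ∀ a b : ℝ, 0 ≤ a → 0 ≤ b → a + b = 1 → ‖a • z1 + b • z2‖ ≤ 1 := by
    intro a b ha hb hab
    refine (norm_add_le _ _).trans ?_
    rw [norm_smul, norm_smul, Real.norm_of_nonneg ha, Real.norm_of_nonneg hb]
    nlinarith
  have hz1' : ‖z‖ ≤ 1 := cvx a b ha hb hab
  have hfz' : |f z| ≤ 2 * η := by simpa [hz] using hfz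
  have hgz : s - 2 * η ^ 2 - η * ‖f‖ ≤ g' z := by
    simp only [hz, map_add, map_smul, smul_eq_mul]
    have hb' : b = 1 - a := by linarith
    subst hb'
    nlinarith
  have hyz : ‖y‖ + 1 - 2 * η ^ 2 ≤ ‖y - z‖ := by
    have e : y - z1 - z2 = (y - z) - (b • z1 + a • z2) := by
      have e1 : z1 = (a + b) • z1 := by rw [hab, one_smul]
      have e2 : z2 = (a + b) • z2 := by rw [hab, one_smul]
      nth_rewrite 1 [e1, e2]
      rw [hz, add_smul, add_smul]
      abel
    have := norm_sub_le (y - z) (b • z1 + a • z2)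
    rw [← e] at this
    have := cvx b a hb ha (by linarith)
    linarith
  -- correction
  set t := 1 + 2 * η * ‖u‖ with ht
  have ht1 : 1 ≤ t := by
    have : 0 ≤ 2 * η * ‖u‖ := by positivity
    linarith
  have ht0 : 0 < t := by linarith
  set z' := z - f z • u with hz'
  have hfu' : ‖f z • u‖ ≤ 2 * η * ‖u‖ := by
    rw [norm_smul]
    exact mul_le_mul_of_nonneg_right hfz' (norm_nonneg _)
  have hz't : ‖z'‖ ≤ t := by
    refine (norm_sub_le _ _).trans ?_
    linarith
  have hz'N : z' ∈ N ⊓ f.ker := by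
    refine ⟨sub_mem hzN (N.smul_mem _ hu), ?_⟩
    simp [hz', hfu]
  have hg'z' : s - 2 * η ^ 2 - η * ‖f‖ - 2 * η * ‖u‖ * s ≤ g' z' := by
    have : |g' (f z • u)| ≤ s * (2 * η * ‖u‖) := by
      refine (g'.le_opNorm _).trans ?_
      rw [hgn]
      exact mul_le_mul_of_nonneg_left hfu' hs0
    rw [hz', map_sub]
    linarith [(abs_le.1 this).2]
  have hu0 : 0 ≤ η * ‖u‖ := by positivity
  have hus0 : 0 ≤ η * ‖u‖ * s := by positivity
  have hf0 : 0 ≤ η * ‖f‖ := by positivity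
  have hηsq : η ^ 2 ≤ η := by nlinarith
  have htinv : 1 - t⁻¹ ≤ 2 * η * ‖u‖ := by
    have : t⁻¹ * t = 1 := inv_mul_cancel₀ ht0.ne'
    have h3 : 0 ≤ t⁻¹ := by positivity
    have h4 : t⁻¹ ≤ 1 := inv_le_one_of_one_le₀ ht1
    have h5 : 1 - t⁻¹ = t⁻¹ * (2 * η * ‖u‖) := by
      rw [ht] at this ⊢
      linarith
    rw [h5]
    exact mul_le_of_le_one_left (by positivity) h4
  have ht01 : 0 ≤ t⁻¹ := by positivity
  have ht11 : t⁻¹ ≤ 1 := inv_le_one_of_one_le₀ ht1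
  have hw1 : ‖t⁻¹ • z'‖ ≤ 1 := by
    rw [norm_smul, Real.norm_of_nonneg ht01]
    calc t⁻¹ * ‖z'‖ ≤ t⁻¹ * t := mul_le_mul_of_nonneg_left hz't ht01
      _ = 1 := inv_mul_cancel₀ ht0.ne'
  have hdiff : ‖z' - t⁻¹ • z'‖ ≤ 2 * η * ‖u‖ := by
    have e : z' - t⁻¹ • z' = (t - 1) • (t⁻¹ • z') := by
      rw [smul_smul, sub_mul, mul_inv_cancel₀ ht0.ne', sub_smul, one_smul, one_mul]
    rw [e, norm_smul, Real.norm_of_nonneg (by linarith)]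
    have : t - 1 = 2 * η * ‖u‖ := by rw [ht]; ring
    rw [this]
    exact mul_le_of_le_one_right (by positivity) hw1
  refine ⟨t⁻¹ • z', Submodule.smul_mem _ _ hz'N, hw1, ?_, ?_⟩
  · rw [← hgg _ (Submodule.smul_mem _ _ hz'N)]
    have h1 : |g' (z' - t⁻¹ • z')| ≤ s * (2 * η * ‖u‖) := by
      refine (g'.le_opNorm _).trans ?_
      rw [hgn]
      exact mul_le_mul_of_nonneg_left hdiff hs0
    rw [map_sub] at h1
    have h2 := (abs_le.1 h1).2
    linarith
  · have e : y - z = (y - t⁻¹ • z') + (t⁻¹ • z' - z') + (- (f z • u)) := by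
      rw [hz']; abel
    have h1 := norm_add_le ((y - t⁻¹ • z') + (t⁻¹ • z' - z')) (- (f z • u))
    have h2 := norm_add_le (y - t⁻¹ • z') (t⁻¹ • z' - z')
    rw [← e, norm_neg] at h1
    rw [norm_sub_rev (t⁻¹ • z')] at h2
    linarith

lemma countable_addClosure {Y : Type*} [AddCommGroup Y] (S : Set Y) (hS : S.Countable) :
    ((AddSubgroup.closure S : AddSubgroup Y) : Set Y).Countable := by
  have : Countable S := hS.to_subtype
  have h2 : ((AddSubgroup.closure S : AddSubgroup Y) : Set Y) ⊆
      range (FreeAbelianGroup.lift ((↑) : S → Y)) := by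
    have : AddSubgroup.closure S ≤ (FreeAbelianGroup.lift ((↑) : S → Y)).range := by
      rw [AddSubgroup.closure_le]
      intro x hx
      exact ⟨FreeAbelianGroup.of ⟨x, hx⟩, by simp⟩
    intro x hx
    exact this hx
  exact (countable_range _).mono h2

lemma exists_countable_part {Y : Type*} [NormedAddCommGroup Y] [NormedSpace ℝ Y]
    (N : Submodule ℝ Y) (hN : Good N) (y x : Y) (ε : ℝ) (hε : 0 < ε) :
    ∃ C : Set Y, C.Countable ∧ (∀ z ∈ C, z ∈ N ∧ ‖z‖ ≤ 1) ∧ (∀ z ∈ C, ‖y‖ + 1 - ε < ‖y - z‖) ∧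
      (x ∈ N → ‖x‖ ≤ 1 → ∀ (g : Y →L[ℝ] ℝ) (δ : ℝ), 0 < δ → ∃ z ∈ C, g x - δ < g z) := by
  by_cases hx : x ∈ N ∧ ‖x‖ ≤ 1
  swap
  · exact ⟨∅, countable_empty, by simp, by simp, fun h1 h2 => absurd ⟨h1, h2⟩ hx⟩
  set W : Set Y := {z | z ∈ N ∧ ‖z‖ ≤ 1 ∧ ‖y‖ + 1 - ε < ‖y - z‖} with hW
  have hxW : x ∈ closure (convexHull ℝ W) := by
    by_contra hc
    obtain ⟨f, u, h1, h2⟩ := geometric_hahn_banach_closed_point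
      (convex_convexHull ℝ W).closure isClosed_closure hc
    obtain ⟨z, hz1, hz2, hz3, hz4⟩ := hN y f x (min ε (f x - u)) hx.1 hx.2
      (lt_min hε (by linarith))
    have m1 := min_le_left ε (f x - u)
    have m2 := min_le_right ε (f x - u)
    have hzW : z ∈ W := ⟨hz1, hz2, by linarith⟩
    have := h1 z (subset_closure (subset_convexHull ℝ W hzW))
    linarith
  obtain ⟨v, hv, hvx⟩ := mem_closure_iff_seq_limit.1 hxW
  have hv' : ∀ n, ∃ t : Finset Y, (t : Set Y) ⊆ W ∧ v n ∈ convexHull ℝ (t : Set Y) := by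
    intro n
    have := hv n
    rw [convexHull_eq_union_convexHull_finite_subsets] at this
    simpa using this
  choose t ht1 ht2 using hv'
  refine ⟨⋃ n, (t n : Set Y), countable_iUnion fun n => (t n).countable_toSet, ?_, ?_, ?_⟩
  · intro z hz
    obtain ⟨n, hn⟩ := mem_iUnion.1 hz
    exact ⟨(ht1 n hn).1, (ht1 n hn).2.1⟩
  · intro z hz
    obtain ⟨n, hn⟩ := mem_iUnion.1 hz
    exact (ht1 n hn).2.2
  · intro _ _ g δ hδ
    by_contra hc
    push Not at hc
    have hle : ∀ n, g (v n) ≤ g x - δ := by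
      intro n
      have hcv : Convex ℝ {w : Y | g w ≤ g x - δ} := convex_halfSpace_le g.isLinear _
      have : (t n : Set Y) ⊆ {w : Y | g w ≤ g x - δ} := fun z hz => hc z (mem_iUnion.2 ⟨n, hz⟩)
      exact convexHull_min this hcv (ht2 n)
    have := le_of_tendsto' ((g.continuous.tendsto x).comp hvx) hle
    linarith

lemma exists_countable_good {Y : Type*} [NormedAddCommGroup Y] [NormedSpace ℝ Y]
    (N : Submodule ℝ Y) (hN : Good N) (q0 : Y) (hq0 : q0 ∈ N) (hq1 : ‖q0‖ ≤ 1) :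
    ∃ Q : Set Y, Q.Countable ∧ q0 ∈ Q ∧ (∀ z ∈ Q, z ∈ N ∧ ‖z‖ ≤ 1) ∧
      ∀ y ∈ AddSubgroup.closure Q, ∀ x ∈ Q, ∀ ε : ℝ, 0 < ε → ∀ g : Y →L[ℝ] ℝ,
        ∃ z ∈ Q, g x - ε < g z ∧ ‖y‖ + 1 - ε < ‖y - z‖ := by
  have hC : ∀ (y x : Y) (k : ℕ), ∃ C : Set Y, C.Countable ∧ (∀ z ∈ C, z ∈ N ∧ ‖z‖ ≤ 1) ∧
      (∀ z ∈ C, ‖y‖ + 1 - (1 / (k + 1 : ℝ)) < ‖y - z‖) ∧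
      (x ∈ N → ‖x‖ ≤ 1 → ∀ (g : Y →L[ℝ] ℝ) (δ : ℝ), 0 < δ → ∃ z ∈ C, g x - δ < g z) :=
    fun y x k => exists_countable_part N hN y x _ (by positivity)
  choose C hC1 hC2 hC3 hC4 using hC
  let F : Set Y → Set Y := fun S =>
    S ∪ ⋃ y ∈ (AddSubgroup.closure S : Set Y), ⋃ x ∈ S, ⋃ k : ℕ, C y x k
  let Q : ℕ → Set Y := fun n => F^[n] {q0}
  have hQs : ∀ n, Q (n + 1) = F (Q n) := fun n => Function.iterate_succ_apply' F n _
  have hmono : Monotone Q := monotone_nat_of_le_succ fun n => by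
    rw [hQs]; exact subset_union_left
  have hcount : ∀ n, (Q n).Countable := by
    intro n
    induction n with
    | zero => exact countable_singleton q0
    | succ n ih =>
      rw [hQs]
      exact ih.union ((countable_addClosure _ ih).biUnion fun y _ =>
        ih.biUnion fun x _ => countable_iUnion fun k => hC1 y x k)
  have hball : ∀ n, ∀ z ∈ Q n, z ∈ N ∧ ‖z‖ ≤ 1 := by
    intro n
    induction n with
    | zero => 
      intro z hz
      have hz' : z = q0 := hz
      rw [hz']
      exact ⟨hq0, hq1⟩
    | succ n ih =>
      intro z hz
      rw [hQs] at hz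
      rcases hz with hz | hz
      · exact ih z hz
      · simp only [mem_iUnion] at hz
        obtain ⟨y, _, x, _, k, hk⟩ := hz
        exact hC2 y x k z hk
  refine ⟨⋃ n, Q n, countable_iUnion hcount, mem_iUnion.2 ⟨0, rfl⟩, ?_, ?_⟩
  · intro z hz
    obtain ⟨n, hn⟩ := mem_iUnion.1 hz
    exact hball n z hn
  · intro y hy x hx ε hε g
    obtain ⟨n, hn⟩ := mem_iUnion.1 hx
    rw [AddSubgroup.closure_iUnion, AddSubgroup.mem_iSup_of_directed] at hy
    swap
    · exact (show Monotone fun i => AddSubgroup.closure (Q i) from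
        fun i j hij => AddSubgroup.closure_mono (hmono hij)).directed_le
    obtain ⟨m, hm⟩ := hy
    obtain ⟨k, hk⟩ := exists_nat_one_div_lt hε
    obtain ⟨z, hz, hgz⟩ := hC4 y x k (hball n x hn).1 (hball n x hn).2 g ε hε
    refine ⟨z, mem_iUnion.2 ⟨max n m + 1, ?_⟩, hgz, ?_⟩
    · rw [hQs]
      refine Or.inr ?_
      simp only [mem_iUnion]
      exact ⟨y, AddSubgroup.closure_mono (hmono (le_max_right n m)) hm, x,
        hmono (le_max_left n m) hn, k, hz⟩
    · have h9 := hC3 y x k z hz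
      linarith

lemma not_determining {Y : Type*} [NormedAddCommGroup Y] [NormedSpace ℝ Y]
    (G : AddSubgroup Y) (p : Y →L[ℝ] Y) (U : Set Y) (V : ℕ → Set Y) (x0 : Y) (hx0 : x0 ∈ U)
    (hG : p x0 ∈ G) (h1 : ‖p x0‖ = 1)
    (step : ∀ n, ∀ y ∈ G, ∀ ε : ℝ, 0 < ε →
      ∃ b ∈ V n, p b ∈ G ∧ ‖y‖ + ‖p b‖ - ε ≤ ‖y - p b‖) : ¬ Determining U V := by
  intro hdet
  have step' : ∀ (n : ℕ) (y : G), ∃ b ∈ V n, p b ∈ G ∧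
      ‖(y:Y)‖ + ‖p b‖ - (1 / 8) * (1 / 2) ^ n ≤ ‖(y:Y) - p b‖ :=
    fun n y => step n y y.2 _ (by positivity)
  choose b hbV hbG hb using step'
  obtain ⟨y, hy0, hys'⟩ : ∃ y : ℕ → G, (y 0 : Y) = p x0 ∧
      ∀ n, (y (n + 1) : Y) = (y n : Y) - p (b n (y n)) :=
    ⟨fun n => Nat.rec (motive := fun _ => G) ⟨p x0, hG⟩
      (fun n y => y - ⟨p (b n y), hbG n y⟩) n, rfl, fun n => rfl⟩
  let c : ℕ → Y := fun n => b n (y n)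
  have hys : ∀ n, (y (n + 1) : Y) = (y n : Y) - p (c n) := hys'
  have hsum : ∀ n, (y n : Y) = p x0 - ∑ k ∈ Finset.range n, p (c k) := by
    intro n
    induction n with
    | zero => simp [hy0]
    | succ n ih => rw [hys, ih, Finset.sum_range_succ]; abel
  have hnorm : ∀ n, 1 + ∑ k ∈ Finset.range n, ‖p (c k)‖ - 1 / 4 + (1 / 4) * (1 / 2) ^ n
      ≤ ‖(y n : Y)‖ := by
    intro n
    induction n with
    | zero => simp [hy0, h1]
    | succ n ih =>
      have := hb n (y n)
      rw [hys, Finset.sum_range_succ, pow_succ]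
      have h2 : ‖p (c n)‖ = ‖p (b n (y n))‖ := rfl
      have h3 : ‖(y n : Y) - p (c n)‖ = ‖(y n : Y) - p (b n (y n))‖ := rfl
      rw [h3, h2]
      linarith
  have hphi : ∀ n, ∃ φ : Y →L[ℝ] ℝ, ‖φ‖ ≤ 1 ∧ φ (y n) = ‖(y n : Y)‖ := fun n =>
    exists_dual_vector'' ℝ (y n : Y)
  choose φ hφ1 hφ2 using hphi
  have hφle : ∀ n x, φ n x ≤ ‖x‖ := by
    intro n x
    refine (le_abs_self _).trans (((φ n).le_opNorm x).trans ?_)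
    nlinarith [norm_nonneg x, hφ1 n]
  have hφle' : ∀ n x, -‖x‖ ≤ φ n x := by
    intro n x
    have := hφle n (-x)
    rw [map_neg, norm_neg] at this
    linarith
  have htot : ∀ n, 3 / 4 + ∑ k ∈ Finset.range n, ‖p (c k)‖ ≤
      φ n (p x0) - ∑ k ∈ Finset.range n, φ n (p (c k)) := by
    intro n
    have h2 := hφ2 n
    rw [hsum n, map_sub, map_sum] at h2
    rw [h2, ← hsum n]
    have h3 := hnorm n
    have h4 : (0:ℝ) ≤ (1 / 4) * (1 / 2) ^ n := by positivity
    linarith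
  have hx : ∀ n, 3 / 4 ≤ φ n (p x0) := by
    intro n
    have h2 : -∑ k ∈ Finset.range n, φ n (p (c k)) ≤ ∑ k ∈ Finset.range n, ‖p (c k)‖ := by
      rw [← Finset.sum_neg_distrib]
      exact Finset.sum_le_sum fun k _ => by linarith [hφle' n (p (c k))]
    linarith [htot n]
  have hc : ∀ k n, k < n → φ n (p (c k)) ≤ 1 / 4 := by
    intro k n hkn
    have h2 : ∑ j ∈ Finset.range n, (‖p (c j)‖ + φ n (p (c j))) ≤ 1 / 4 := by
      rw [Finset.sum_add_distrib]
      have := hφle n (p x0)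
      linarith [htot n]
    have h3 : ‖p (c k)‖ + φ n (p (c k)) ≤
        ∑ j ∈ Finset.range n, (‖p (c j)‖ + φ n (p (c j))) :=
      Finset.single_le_sum (f := fun j => ‖p (c j)‖ + φ n (p (c j)))
        (fun j _ => by linarith [hφle' n (p (c j))]) (Finset.mem_range.2 hkn)
    linarith [norm_nonneg (p (c k))]
  have hmem := hdet (range c) (fun n => ⟨c n, ⟨n, rfl⟩, hbV n (y n)⟩) hx0
  have hcv : Convex ℝ {x : Y | ∀ᶠ n in Filter.atTop, φ n (p x) ≤ 1 / 4} := by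
    intro u hu v hv s t hs ht hst
    rw [Set.mem_ofPred_eq] at *
    filter_upwards [hu, hv] with n h2 h3
    simp only [map_add, map_smul, smul_eq_mul]
    nlinarith
  have hsub : range c ⊆ {x : Y | ∀ᶠ n in Filter.atTop, φ n (p x) ≤ 1 / 4} := by
    rintro _ ⟨k, rfl⟩
    rw [Set.mem_ofPred_eq]
    filter_upwards [Filter.eventually_gt_atTop k] with n hn
    exact hc k n hn
  have hmem2 : p x0 ∈ closure (p '' convexHull ℝ (range c)) :=
    image_closure_subset_closure_image p.continuous ⟨x0, hmem, rfl⟩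
  obtain ⟨_, ⟨w, hw, rfl⟩, hd⟩ := Metric.mem_closure_iff.1 hmem2 (1 / 2) (by norm_num)
  obtain ⟨n, hn⟩ := Filter.Eventually.exists (convexHull_min hsub hcv hw)
  have h5 := hφle n (p x0 - p w)
  rw [map_sub] at h5
  rw [dist_eq_norm] at hd
  linarith [hx n]

lemma half_pow_gap (n m : ℕ) (h : m ≠ n) :
    (1 / 4) * ((1 / 2 : ℝ) ^ (n + 1)) ^ 2 ≤ ((1 / 2 : ℝ) ^ (m + 1) - (1 / 2) ^ (n + 1)) ^ 2 := by
  have hn : (0:ℝ) < (1 / 2) ^ (n + 1) := by positivity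
  rcases lt_or_gt_of_ne h with h | h
  · have : (1 / 2 : ℝ) ^ (n + 1) ≤ (1 / 2) ^ (m + 1 + 1) :=
      pow_le_pow_of_le_one (by norm_num) (by norm_num) (by omega)
    rw [pow_succ _ (m + 1)] at this
    nlinarith
  · have : (1 / 2 : ℝ) ^ (m + 1) ≤ (1 / 2) ^ (n + 1 + 1) :=
      pow_le_pow_of_le_one (by norm_num) (by norm_num) (by omega)
    rw [pow_succ _ (n + 1)] at this
    nlinarith

lemma good_exists_unit {Y : Type*} [NormedAddCommGroup Y] [NormedSpace ℝ Y]
    (N : Submodule ℝ Y) (hN : Good N) : ∃ x ∈ N, ‖x‖ = 1 := by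
  obtain ⟨z, hz, h1, h2, h3⟩ := hN 0 0 0 (1 / 2) (zero_mem _) (by simp) (by norm_num)
  simp only [norm_zero, zero_sub, norm_neg] at h3
  have hz0 : 0 < ‖z‖ := by linarith
  refine ⟨‖z‖⁻¹ • z, N.smul_mem _ hz, ?_⟩
  rw [norm_smul, norm_inv, norm_norm, inv_mul_cancel₀ hz0.ne']

theorem exists_symmetric_scd_sets_union_not_scd
    {Y : Type*} [NormedAddCommGroup Y] [NormedSpace ℝ Y] [CompleteSpace Y]
    (h : DaugavetProperty Y) :
    ∃ B₁ B₂ : Set Y,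
      Convex ℝ B₁ ∧ IsClosed B₁ ∧ IsBounded B₁ ∧ B₁ = -B₁ ∧ IsSCD B₁ ∧
      Convex ℝ B₂ ∧ IsClosed B₂ ∧ IsBounded B₂ ∧ B₂ = -B₂ ∧ IsSCD B₂ ∧
      ¬ IsSCD (B₁ ∪ B₂) := by
  have hT := good_top h
  obtain ⟨u1, -, hu1n⟩ := good_exists_unit _ hT
  obtain ⟨f1, -, hf1u1⟩ := exists_dual_vector ℝ u1 (by rw [hu1n]; norm_num)
  replace hf1u1 : f1 u1 = 1 := by rw [hf1u1, hu1n]; rfl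
  have hN1 := good_inf_ker _ hT f1 u1 trivial hf1u1
  obtain ⟨u2, hu2N, hu2n⟩ := good_exists_unit _ hN1
  have hf1u2 : f1 u2 = 0 := hu2N.2
  obtain ⟨f2', -, hf2'⟩ := exists_dual_vector ℝ u2 (by rw [hu2n]; norm_num)
  replace hf2' : f2' u2 = 1 := by rw [hf2', hu2n]; rfl
  obtain ⟨f2, hf2u1, hf2u2⟩ : ∃ f2 : Y →L[ℝ] ℝ, f2 u1 = 0 ∧ f2 u2 = 1 :=
    ⟨f2' - f2' u1 • f1, by simp [hf1u1], by simp [hf1u2, hf2']⟩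
  have hN2 := good_inf_ker _ hN1 f2 u2 hu2N hf2u2
  set N := ((⊤ : Submodule ℝ Y) ⊓ f1.ker) ⊓ f2.ker with hNdef
  have hNf1 : ∀ x ∈ N, f1 x = 0 := fun x hx => hx.1.2
  have hNf2 : ∀ x ∈ N, f2 x = 0 := fun x hx => hx.2
  obtain ⟨q0, hq0N, hq0n⟩ := good_exists_unit _ hN2
  obtain ⟨Q, hQc, hq0Q, hQN, hQ⟩ := exists_countable_good N hN2 q0 hq0N hq0n.le
  -- the projection
  let p : Y →L[ℝ] Y := ContinuousLinearMap.id ℝ Y - f1.smulRight u1 - f2.smulRight u2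
  have hp : ∀ x, p x = x - f1 x • u1 - f2 x • u2 := fun x => rfl
  have hpQ : ∀ x ∈ N, p x = x := fun x hx => by simp [hp, hNf1 x hx, hNf2 x hx]
  have hpu1 : p u1 = 0 := by simp [hp, hf1u1, hf2u1]
  have hpu2 : p u2 = 0 := by simp [hp, hf1u2, hf2u2]
  -- enumeration
  obtain ⟨e, he⟩ := hQc.exists_eq_range ⟨q0, hq0Q⟩
  have heQ : ∀ n, e n ∈ Q := fun n => he ▸ mem_range_self n
  let s : ℕ → ℝ := fun n => (1 / 2) ^ (n + 1)
  have hs0 : ∀ n, 0 < s n := fun n => by positivity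
  have hs1 : ∀ n, s n ≤ 1 := fun n => pow_le_one₀ (by norm_num) (by norm_num)
  let x : ℕ → Y := fun n => e n.unpair.1
  have hxQ : ∀ n, x n ∈ Q := fun n => heQ _
  let P : ℕ → Y := fun n => (1 - s n) • x n + s n • u1 + (1 - s n ^ 2) • u2
  have hf1P : ∀ n, f1 (P n) = s n := fun n => by
    simp [P, hf1u1, hf1u2, hNf1 _ (hQN _ (hxQ n)).1]
  have hf2P : ∀ n, f2 (P n) = 1 - s n ^ 2 := fun n => by
    simp [P, hf2u1, hf2u2, hNf2 _ (hQN _ (hxQ n)).1]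
  let R : Bool → Y := fun i => if i then u1 + u2 else u1 - u2
  have hP := DSet_scd P 3 (by
    intro n
    have h1 : ‖(1 - s n) • x n‖ ≤ 1 := by
      rw [norm_smul, Real.norm_of_nonneg (by linarith [hs1 n])]
      nlinarith [(hQN _ (hxQ n)).2, hs0 n, hs1 n, norm_nonneg (x n)]
    have h2 : ‖s n • u1‖ ≤ 1 := by
      rw [norm_smul, Real.norm_of_nonneg (hs0 n).le, hu1n]
      linarith [hs1 n]
    have h3 : ‖(1 - s n ^ 2) • u2‖ ≤ 1 := by
      rw [norm_smul, Real.norm_of_nonneg (by nlinarith [hs1 n, hs0 n]), hu2n]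
      nlinarith [hs0 n]
    have h4 := norm_add₃_le (a := (1 - s n) • x n) (b := s n • u1) (c := (1 - s n ^ 2) • u2)
    exact h4.trans (by linarith)) (by
    intro n
    refine ⟨f2 + (2 * s n) • f1, (1 / 4) * s n ^ 2, by have := hs0 n; positivity, ?_, ?_⟩
    · intro m hm
      have hmn : m ≠ n := fun h0 => hm (by rw [h0])
      have hgap : (1 / 4) * s n ^ 2 ≤ (s m - s n) ^ 2 := half_pow_gap n m hmn
      simp only [_root_.add_apply, _root_.smul_apply, smul_eq_mul, hf1P, hf2P]
      nlinarith
    · intro m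
      simp only [_root_.add_apply, _root_.smul_apply, smul_eq_mul, hf1P, hf2P]
      nlinarith [hs0 n, hs0 m, hs1 n, hs1 m, mul_pos (hs0 n) (hs0 m)])
  have hR := DSet_scd R 2 (by
    intro i
    have h1 := norm_add_le u1 u2
    have h2 := norm_sub_le u1 u2
    cases i <;> simp [R] <;> linarith) (by
    rintro (_ | _)
    · refine ⟨f1 - f2, 1, one_pos, ?_, ?_⟩
      · rintro (_ | _) hj
        · exact absurd rfl hj
        · simp [R, hf1u1, hf1u2, hf2u1, hf2u2]
      · rintro (_ | _) <;> simp [R, hf1u1, hf1u2, hf2u1, hf2u2] <;> norm_num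
    · refine ⟨f1 + f2, 1, one_pos, ?_, ?_⟩
      · rintro (_ | _) hj
        · simp [R, hf1u1, hf1u2, hf2u1, hf2u2]
        · exact absurd rfl hj
      · rintro (_ | _) <;> simp [R, hf1u1, hf1u2, hf2u1, hf2u2] <;> norm_num)
  refine ⟨DSet P, DSet R, hP.1, hP.2.1, hP.2.2.1, hP.2.2.2.1, hP.2.2.2.2,
    hR.1, hR.2.1, hR.2.2.1, hR.2.2.2.1, hR.2.2.2.2, ?_⟩
  rintro ⟨V, hV, hdet⟩
  -- limit points
  have hlim : ∀ q ∈ Q, q + u2 ∈ DSet P := by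
    intro q hq
    rw [he] at hq
    obtain ⟨k, rfl⟩ := hq
    have hst : Filter.Tendsto (fun j => s (Nat.pair k j)) Filter.atTop (nhds 0) := by
      have h1 : Filter.Tendsto (fun j : ℕ => (1 / 2 : ℝ) ^ j) Filter.atTop (nhds 0) :=
        tendsto_pow_atTop_nhds_zero_of_lt_one (by norm_num) (by norm_num)
      refine squeeze_zero (fun j => (hs0 _).le) (fun j => ?_) h1
      exact pow_le_pow_of_le_one (by norm_num) (by norm_num)
        ((Nat.right_le_pair k j).trans (Nat.le_succ _))
    have hc : Continuous fun t : ℝ => (1 - t) • e k + t • u1 + (1 - t ^ 2) • u2 := by fun_prop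
    have ht := (hc.tendsto 0).comp hst
    have h0 : (1 - (0:ℝ)) • e k + (0:ℝ) • u1 + (1 - (0:ℝ) ^ 2) • u2 = e k + u2 := by simp
    rw [h0] at ht
    refine hP.2.1.mem_of_tendsto ht (Filter.Eventually.of_forall fun j => ?_)
    have : P (Nat.pair k j) ∈ DSet P :=
      subset_closure (subset_convexHull ℝ _ (Or.inl ⟨_, rfl⟩))
    simpa [P, x] using this
  have hlim' : ∀ q ∈ Q, -(q + u2) ∈ DSet P := by
    intro q hq
    rw [hP.2.2.2.1]
    simpa using hlim q hq
  have hpR : ∀ w ∈ DSet R, p w = 0 := by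
    have hcl : IsClosed {w : Y | p w = 0} := isClosed_eq p.continuous continuous_const
    have hcv : Convex ℝ {w : Y | p w = 0} := by
      intro a ha b hb r t _ _ _
      rw [Set.mem_ofPred_eq] at *
      simp [ha, hb]
    have hsub : range R ∪ -range R ⊆ {w : Y | p w = 0} := by
      rintro w (⟨i, rfl⟩ | ⟨i, hi⟩)
      · rw [Set.mem_ofPred_eq]
        cases i <;> simp [R, hpu1, hpu2]
      · rw [Set.mem_ofPred_eq]
        have : p (R i) = 0 := by cases i <;> simp [R, hpu1, hpu2]
        rw [hi, map_neg] at this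
        simpa using this
    exact fun w hw => closure_minimal (convexHull_min hsub hcv) hcl hw
  have hRmem : ∀ n, u1 + (1 - s n) • u2 ∈ DSet R := by
    intro n
    have m1 : u1 + u2 ∈ DSet R :=
      subset_closure (subset_convexHull ℝ _ (Or.inl ⟨true, by simp [R]⟩))
    have m2 : u1 - u2 ∈ DSet R :=
      subset_closure (subset_convexHull ℝ _ (Or.inl ⟨false, by simp [R]⟩))
    have := hR.1 m1 m2 (show 0 ≤ 1 - s n / 2 by linarith [hs1 n, hs0 n])
      (show 0 ≤ s n / 2 by linarith [hs0 n]) (by ring)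
    convert this using 1
    module
  have hPeq : ∀ n, P n = (1 - s n) • (x n + u2) + s n • (u1 + (1 - s n) • u2) := by
    intro n
    simp only [P]
    module
  have hx0p : p (q0 + u2) = q0 := by rw [map_add, hpQ q0 hq0N, hpu2, add_zero]
  refine not_determining (AddSubgroup.closure Q) p _ V (q0 + u2) (Or.inl (hlim q0 hq0Q))
    (by rw [hx0p]; exact AddSubgroup.subset_closure hq0Q) (by rw [hx0p]; exact hq0n) ?_ hdet
  intro n y hy ε hε
  obtain ⟨hne, f, hf, δ, hδ, hVn⟩ := hV n
  set σ := sSup (f '' (DSet P ∪ DSet R)) with hσ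
  have hmemV : ∀ b, b ∈ DSet P ∪ DSet R → σ - δ < f b → b ∈ V n := by
    intro b h1 h2
    rw [hVn]; exact ⟨h1, h2⟩
  by_cases c1 : ∃ w ∈ DSet R, σ - δ < f w
  · obtain ⟨w, hw, hfw⟩ := c1
    refine ⟨w, hmemV w (Or.inr hw) hfw, ?_, ?_⟩
    · rw [hpR w hw]; exact zero_mem _
    · rw [hpR w hw]; simp; exact hε.le
  by_cases c2 : ∃ q ∈ Q, σ - δ < f (q + u2)
  · obtain ⟨q, hq, hfq⟩ := c2
    obtain ⟨z, hz, hz1, hz2⟩ := hQ y hy q hq (min ε (f (q + u2) - (σ - δ)))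
      (lt_min hε (by linarith)) f
    have m1 := min_le_left ε (f (q + u2) - (σ - δ))
    have m2 := min_le_right ε (f (q + u2) - (σ - δ))
    have hpz : p (z + u2) = z := by rw [map_add, hpQ z (hQN z hz).1, hpu2, add_zero]
    rw [map_add] at m2
    refine ⟨z + u2, hmemV _ (Or.inl (hlim z hz)) (by rw [map_add]; rw [map_add] at hz1; linarith),
      ?_, ?_⟩
    · rw [hpz]; exact AddSubgroup.subset_closure hz
    · rw [hpz]; linarith [(hQN z hz).2]
  by_cases c3 : ∃ q ∈ Q, σ - δ < f (-(q + u2))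
  · obtain ⟨q, hq, hfq⟩ := c3
    obtain ⟨z, hz, hz1, hz2⟩ := hQ (-y) (neg_mem hy) q hq (min ε (f (-(q + u2)) - (σ - δ)))
      (lt_min hε (by linarith)) (-f)
    have m1 := min_le_left ε (f (-(q + u2)) - (σ - δ))
    have m2 := min_le_right ε (f (-(q + u2)) - (σ - δ))
    have hpz : p (-(z + u2)) = -z := by
      rw [map_neg, map_add, hpQ z (hQN z hz).1, hpu2, add_zero]
    rw [_root_.neg_apply, _root_.neg_apply] at hz1
    refine ⟨-(z + u2), hmemV _ (Or.inl (hlim' z hz)) ?_, ?_, ?_⟩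
    · have e1 : f (-(z + u2)) = - f z - f u2 := by rw [map_neg, map_add]; ring
      have e2 : f (-(q + u2)) = - f q - f u2 := by rw [map_neg, map_add]; ring
      rw [e1]
      linarith
    · rw [hpz]; exact neg_mem (AddSubgroup.subset_closure hz)
    · rw [hpz, norm_neg]
      have e1 : ‖y - -z‖ = ‖-y - z‖ := by
        rw [← norm_neg]; congr 1; abel
      rw [e1]
      rw [norm_neg] at hz2
      linarith [(hQN z hz).2]
  exfalso
  push Not at c1 c2 c3
  have hPle : ∀ w ∈ DSet P, f w ≤ σ - δ := by
    have hcl : IsClosed {w : Y | f w ≤ σ - δ} := isClosed_le f.continuous continuous_const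
    have hcv : Convex ℝ {w : Y | f w ≤ σ - δ} := convex_halfSpace_le f.isLinear _
    have hsub : range P ∪ -range P ⊆ {w : Y | f w ≤ σ - δ} := by
      rintro w (⟨i, rfl⟩ | ⟨i, hi⟩)
      · rw [Set.mem_ofPred_eq, hPeq]
        have h1 := c2 _ (hxQ i)
        have h2 := c1 _ (hRmem i)
        have h3 := mul_le_mul_of_nonneg_left h1 (show 0 ≤ 1 - s i by linarith [hs1 i])
        have h4 := mul_le_mul_of_nonneg_left h2 (hs0 i).le
        rw [map_add, map_smul f (1 - s i), map_smul f (s i), smul_eq_mul, smul_eq_mul]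
        linarith
      · have hw : w = -P i := by rw [hi, neg_neg]
        rw [Set.mem_ofPred_eq, hw, hPeq]
        have h1 := c3 _ (hxQ i)
        have h2 := c1 (-(u1 + (1 - s i) • u2)) (by
          rw [hR.2.2.2.1]; simpa using hRmem i)
        have h3 := mul_le_mul_of_nonneg_left h1 (show 0 ≤ 1 - s i by linarith [hs1 i])
        have h4 := mul_le_mul_of_nonneg_left h2 (hs0 i).le
        rw [map_neg] at h3 h4 ⊢
        rw [map_add, map_smul f (1 - s i), map_smul f (s i), smul_eq_mul, smul_eq_mul]
        linarith
    exact fun w hw => closure_minimal (convexHull_min hsub hcv) hcl hw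
  obtain ⟨w, hw⟩ := hne
  rw [hVn] at hw
  have hw2 : σ - δ < f w := hw.2
  rcases hw.1 with hw1 | hw1
  · linarith [hPle w hw1]
  · linarith [c1 w hw1]
end

section
/- Let Y be a real Banach space with the Daugavet property. Then there exist convex, closed, bounded, symmetric (i.e., C = −C) SCD sets C₁, C₂ ⊂ Y such that the Minkowski sum C₁ + C₂ is not SCD. -/
open Bornology Set Pointwise

variable {X : Type*} [NormedAddCommGroup X] [NormedSpace ℝ X]

section Aux

variable {Y : Type*} [NormedAddCommGroup Y] [NormedSpace ℝ Y]

/-- Slice form of the Daugavet property for a subspace. -/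
def DPS (N : Submodule ℝ Y) : Prop :=
  ∀ z x : Y, x ∈ N → ‖x‖ ≤ 1 → ∀ f : Y →L[ℝ] ℝ, ∀ ε : ℝ, 0 < ε →
    ∃ y ∈ N, ‖y‖ ≤ 1 ∧ f x - ε < f y ∧ 1 + ‖z‖ - ε < ‖y - z‖

lemma abs_apply_le_of_norm_le_one {g : Y →L[ℝ] ℝ} {y : Y} {c : ℝ} (hg : ‖g‖ ≤ c) (hy : ‖y‖ ≤ 1) :
    |g y| ≤ c := by
  have h1 := g.le_opNorm y
  rw [Real.norm_eq_abs] at h1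
  have : ‖g‖ * ‖y‖ ≤ ‖g‖ * 1 := by gcongr
  linarith

lemma dps_top_aux (h : DaugavetProperty Y) (z x : Y) (hz : z ≠ 0) (hx : ‖x‖ ≤ 1)
    (f : Y →L[ℝ] ℝ) (hf : ‖f‖ = 1) (ε : ℝ) (hε : 0 < ε) :
    ∃ y : Y, ‖y‖ ≤ 1 ∧ f x - ε < f y ∧ 1 + ‖z‖ - ε < ‖y - z‖ := by
  have hr : 0 < ‖z‖ := norm_pos_iff.2 hz
  have h1 := h f (-z)
  have h2 : ‖f.smulRight (-z)‖ = ‖z‖ := by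
    rw [ContinuousLinearMap.norm_smulRight_apply, hf, norm_neg, one_mul]
  rw [h2] at h1
  set η := min (ε / 2) (ε * ‖z‖ / 2) with hη
  have hηp : 0 < η := by positivity
  have hη1 : η ≤ ε / 2 := min_le_left _ _
  have hη2 : η ≤ ε * ‖z‖ / 2 := min_le_right _ _
  obtain ⟨y0, hy0, hy1⟩ := ContinuousLinearMap.exists_lt_apply_of_lt_opNorm
    (ContinuousLinearMap.id ℝ Y + f.smulRight (-z)) (r := 1 + ‖z‖ - η) (by linarith)
  have key : ∃ y : Y, ‖y‖ ≤ 1 ∧ 0 ≤ f y ∧ 1 + ‖z‖ - η < ‖y - f y • z‖ := by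
    have e1 : (ContinuousLinearMap.id ℝ Y + f.smulRight (-z)) y0 = y0 - f y0 • z := by
      simp [sub_eq_add_neg]
    rw [e1] at hy1
    rcases le_total 0 (f y0) with h0 | h0
    · exact ⟨y0, hy0.le, h0, hy1⟩
    · refine ⟨-y0, by rw [norm_neg]; exact hy0.le, by simp [h0], ?_⟩
      have : -y0 - f (-y0) • z = -(y0 - f y0 • z) := by simp [sub_eq_add_neg, add_comm]
      rw [this, norm_neg]; exact hy1
  obtain ⟨y, hy, hfy, hd⟩ := key
  have h3 : ‖y - f y • z‖ ≤ ‖y‖ + f y * ‖z‖ := by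
    calc _ ≤ ‖y‖ + ‖f y • z‖ := norm_sub_le _ _
      _ = _ := by rw [norm_smul, Real.norm_eq_abs, abs_of_nonneg hfy]
  have hfy1 : f y ≤ 1 := (abs_le.1 (abs_apply_le_of_norm_le_one hf.le hy)).2
  have hfx1 : f x ≤ 1 := (abs_le.1 (abs_apply_le_of_norm_le_one hf.le hx)).2
  refine ⟨y, hy, ?_, ?_⟩
  · have : (1 - f y) * ‖z‖ < ε * ‖z‖ := by nlinarith
    have := lt_of_mul_lt_mul_right this hr.le
    linarith
  · have h4 : ‖y - f y • z‖ ≤ ‖y - z‖ + (1 - f y) * ‖z‖ := by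
      calc _ = ‖(y - z) + (1 - f y) • z‖ := by congr 1; rw [sub_smul, one_smul]; abel
        _ ≤ ‖y - z‖ + ‖(1 - f y) • z‖ := norm_add_le _ _
        _ = _ := by rw [norm_smul, Real.norm_eq_abs, abs_of_nonneg (by linarith)]
    nlinarith

lemma dps_top (h : DaugavetProperty Y) : DPS (⊤ : Submodule ℝ Y) := by
  have hid := h 0 0
  have hnt : Nontrivial Y := by
    by_contra hn
    rw [not_nontrivial_iff_subsingleton] at hn
    have : (ContinuousLinearMap.id ℝ Y + (0 : Y →L[ℝ] ℝ).smulRight (0:Y)) = 0 := by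
      ext x; exact Subsingleton.elim _ _
    rw [this] at hid
    have := norm_nonneg ((0 : Y →L[ℝ] ℝ).smulRight (0:Y))
    simp at hid
  -- nonzero z, all f
  have A : ∀ z x : Y, z ≠ 0 → ‖x‖ ≤ 1 → ∀ f : Y →L[ℝ] ℝ, ∀ ε : ℝ, 0 < ε →
      ∃ y : Y, ‖y‖ ≤ 1 ∧ f x - ε < f y ∧ 1 + ‖z‖ - ε < ‖y - z‖ := by
    intro z x hz hx f ε hε
    by_cases hf : f = 0
    · obtain ⟨g, hg, -⟩ := exists_dual_vector' ℝ z
      obtain ⟨y, h1, h2, h3⟩ := dps_top_aux h z x hz hx g hg ε hε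
      exact ⟨y, h1, by simp [hf, hε], h3⟩
    · have hfp : 0 < ‖f‖ := norm_pos_iff.2 hf
      obtain ⟨y, h1, h2, h3⟩ := dps_top_aux h z x hz hx (‖f‖⁻¹ • f)
        (by rw [norm_smul, norm_inv, norm_norm, inv_mul_cancel₀ hfp.ne']) (min ε (ε / ‖f‖)) (by positivity)
      have m1 := min_le_left ε (ε / ‖f‖)
      have m2 := min_le_right ε (ε / ‖f‖)
      refine ⟨y, h1, ?_, by linarith⟩
      simp only [_root_.smul_apply, smul_eq_mul] at h2
      have h4 : ‖f‖⁻¹ * f x - ε / ‖f‖ < ‖f‖⁻¹ * f y := by linarith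
      have h5 := mul_lt_mul_of_pos_left h4 hfp
      field_simp at h5
      linarith
  intro z x _ hx f ε hε
  by_cases hz : z = 0
  · obtain ⟨z', hz'⟩ := exists_norm_eq Y (show (0:ℝ) ≤ ε / 4 by positivity)
    obtain ⟨y, h1, h2, h3⟩ := A z' x (by rw [← norm_pos_iff, hz']; positivity) hx f (ε/4) (by positivity)
    refine ⟨y, trivial, h1, by linarith, ?_⟩
    have := norm_sub_le y z'
    subst hz
    simp only [norm_zero, sub_zero]
    linarith
  · obtain ⟨y, h1⟩ := A z x hz hx f ε hε
    exact ⟨y, trivial, h1⟩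

set_option maxHeartbeats 1000000 in
lemma DPS.inf_ker {N : Submodule ℝ Y} (h : DPS N) (φ : Y →L[ℝ] ℝ) :
    DPS (N ⊓ φ.ker) := by
  by_cases he : ∀ e ∈ N, φ e = 0
  · have : N ⊓ φ.ker = N := inf_eq_left.2 fun x hx => he x hx
    rw [this]; exact h
  push Not at he
  obtain ⟨e0, he0, he1⟩ := he
  obtain ⟨e, heN, heφ⟩ : ∃ e ∈ N, φ e = 1 :=
    ⟨(φ e0)⁻¹ • e0, N.smul_mem _ he0, by simp [he1]⟩
  intro z x hx hx1 f ε hε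
  set N' := N ⊓ φ.ker with hN'
  obtain ⟨F, hF, hFn⟩ := exists_extension_norm_eq (𝕜 := ℝ) N' (f.comp N'.subtypeL)
  have hF' : ∀ y ∈ N', F y = f y := fun y hy => hF ⟨y, hy⟩
  set s := ‖F‖ with hs
  have hs0 : 0 ≤ s := norm_nonneg _
  have hFs : ∀ y : Y, ‖y‖ ≤ 1 → F y ≤ s := fun y hy =>
    (abs_le.1 (abs_apply_le_of_norm_le_one (le_refl _) hy)).2
  have hK : 0 ≤ ‖φ‖ := norm_nonneg _
  obtain ⟨t, ht, htφ⟩ : ∃ t : ℝ, 0 < t ∧ t * ‖φ‖ ≤ ε / 4 :=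
    ⟨ε / 4 / (‖φ‖ + 1), by positivity, by
      rw [div_mul_eq_mul_div, div_le_iff₀ (by positivity)]; nlinarith⟩
  have hEn : 0 ≤ ‖e‖ := norm_nonneg _
  -- choose κ and δ
  obtain ⟨δ, hδ, hδ1, hδ2, hδ3⟩ : ∃ δ : ℝ, 0 < δ ∧ 4 * δ ≤ ε / 4 ∧
      2 * (2 * δ / t * ‖e‖) * s ≤ ε / 4 ∧ 2 * (2 * δ / t * ‖e‖) ≤ ε / 4 := by
    refine ⟨ε / (16 * (1 + ‖e‖ * (s + 1) / t)), by positivity, ?_, ?_, ?_⟩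
    · have : ε / (16 * (1 + ‖e‖ * (s + 1) / t)) ≤ ε / 16 := by
        apply div_le_div_of_nonneg_left hε.le (by norm_num)
        have : 0 ≤ ‖e‖ * (s + 1) / t := by positivity
        linarith
      linarith
    · rw [← sub_nonneg]
      have : ε / 4 - 2 * (2 * (ε / (16 * (1 + ‖e‖ * (s + 1) / t))) / t * ‖e‖) * s =
        ε / 4 * ((t + ‖e‖) / (t + ‖e‖ * (s+1))) := by field_simp; ring
      rw [this]; positivity
    · rw [← sub_nonneg]
      have : ε / 4 - 2 * (2 * (ε / (16 * (1 + ‖e‖ * (s + 1) / t))) / t * ‖e‖) =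
        ε / 4 * ((t + ‖e‖ * s) / (t + ‖e‖ * (s+1))) := by field_simp; ring
      rw [this]; positivity
  obtain ⟨x', hx', hx'1, hx'2⟩ : ∃ x' ∈ N', ‖x'‖ ≤ 1 ∧ s - δ < F x' := by
    obtain ⟨q, hq1, hq2⟩ := ContinuousLinearMap.exists_lt_apply_of_lt_opNorm
      (f.comp N'.subtypeL) (r := s - δ) (by rw [← hFn]; linarith)
    rw [Real.norm_eq_abs] at hq2
    rcases le_total 0 ((f.comp N'.subtypeL) q) with h0 | h0
    · rw [abs_of_nonneg h0, ← hF] at hq2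
      exact ⟨q, q.2, hq1.le, hq2⟩
    · rw [abs_of_nonpos h0, ← hF] at hq2
      exact ⟨-q, N'.neg_mem q.2, by rw [norm_neg]; exact hq1.le, by simpa using hq2⟩
  have hφx' : φ x' = 0 := hx'.2
  obtain ⟨d1, hd1N, hd1, hd1a, hd1b⟩ := h z x' hx'.1 hx'1 (F + t • φ) δ hδ
  obtain ⟨d2, hd2N, hd2, hd2a, hd2b⟩ := h (z - d1) x' hx'.1 hx'1 (F - t • φ) δ hδ
  simp only [_root_.add_apply, _root_.sub_apply,
    _root_.smul_apply, smul_eq_mul, hφx', mul_zero, add_zero, sub_zero] at hd1a hd2a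
  set η := 2 * δ / t with hη
  have hηp : 0 < η := by positivity
  have hηt : t * η = 2 * δ := by rw [hη]; field_simp
  have a1 : -η < φ d1 := by
    have := hFs d1 hd1
    have : t * (-η) < t * φ d1 := by linarith
    exact lt_of_mul_lt_mul_left this ht.le
  have a2 : φ d2 < η := by
    have := hFs d2 hd2
    have : t * φ d2 < t * η := by linarith
    exact lt_of_mul_lt_mul_left this ht.le
  have b1 : s - 2 * δ - ε / 4 < F d1 := by
    have := (abs_le.1 (abs_apply_le_of_norm_le_one (g := φ) le_rfl hd1)).2
    have := mul_le_mul_of_nonneg_left this ht.le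
    linarith
  have b2 : s - 2 * δ - ε / 4 < F d2 := by
    have := (abs_le.1 (abs_apply_le_of_norm_le_one (g := φ) le_rfl hd2)).1
    have := mul_le_mul_of_nonneg_left this ht.le
    linarith
  -- convex combination
  obtain ⟨a, b, ha, hb, hab, hφy⟩ : ∃ a b : ℝ, 0 ≤ a ∧ 0 ≤ b ∧ a + b = 1 ∧
      |a * φ d1 + b * φ d2| ≤ η := by
    by_cases c1 : φ d1 ≤ 0
    · exact ⟨1, 0, by norm_num, by norm_num, by norm_num, by rw [abs_le]; constructor <;> linarith⟩
    by_cases c2 : 0 ≤ φ d2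
    · exact ⟨0, 1, by norm_num, by norm_num, by norm_num, by rw [abs_le]; constructor <;> linarith⟩
    push Not at c1 c2
    have hpos : 0 < φ d1 - φ d2 := by linarith
    refine ⟨-φ d2 / (φ d1 - φ d2), φ d1 / (φ d1 - φ d2), div_nonneg (by linarith) hpos.le,
      div_nonneg c1.le hpos.le, by field_simp; ring, ?_⟩
    have : -φ d2 / (φ d1 - φ d2) * φ d1 + φ d1 / (φ d1 - φ d2) * φ d2 = 0 := by
      field_simp; ring
    rw [this, abs_zero]; exact hηp.le
  set y0 := a • d1 + b • d2 with hy0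
  have hy0N : y0 ∈ N := N.add_mem (N.smul_mem _ hd1N) (N.smul_mem _ hd2N)
  have hy0n : ‖y0‖ ≤ 1 := by
    calc ‖y0‖ ≤ ‖a • d1‖ + ‖b • d2‖ := norm_add_le _ _
      _ = a * ‖d1‖ + b * ‖d2‖ := by
        rw [norm_smul, norm_smul, Real.norm_of_nonneg ha, Real.norm_of_nonneg hb]
      _ ≤ 1 := by nlinarith
  have hφy0 : |φ y0| ≤ η := by simpa [hy0] using hφy
  have hFy0 : s - 2 * δ - ε / 4 ≤ F y0 := by
    have : F y0 = a * F d1 + b * F d2 := by simp [hy0]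
    rw [this]
    have e1 := mul_le_mul_of_nonneg_left b1.le ha
    have e2 := mul_le_mul_of_nonneg_left b2.le hb
    have : s - 2 * δ - ε / 4 = a * (s - 2 * δ - ε / 4) + b * (s - 2 * δ - ε / 4) := by
      rw [← add_mul, hab, one_mul]
    linarith
  have hdy0 : 1 + ‖z‖ - 4 * δ ≤ ‖y0 - z‖ := by
    obtain ⟨g, hg1, hg2⟩ := exists_dual_vector'' ℝ (d2 - (z - d1))
    have n1 : ‖z - d1‖ = ‖d1 - z‖ := norm_sub_rev _ _
    have g1 := (abs_le.1 (abs_apply_le_of_norm_le_one hg1 hd1)).2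
    have g2 := (abs_le.1 (abs_apply_le_of_norm_le_one hg1 hd2)).2
    have g3 : |g z| ≤ ‖z‖ := by
      have := g.le_opNorm z
      rw [Real.norm_eq_abs] at this
      have := mul_le_mul_of_nonneg_right hg1 (norm_nonneg z)
      linarith
    have g3 := (abs_le.1 g3).1
    have g4 : g (y0 - z) ≤ ‖y0 - z‖ := by
      have := g.le_opNorm (y0 - z)
      rw [Real.norm_eq_abs] at this
      have := mul_le_mul_of_nonneg_right hg1 (norm_nonneg (y0 - z))
      have := le_abs_self (g (y0 - z))
      linarith
    have g5 : g (y0 - z) = a * g d1 + b * g d2 - g z := by simp [hy0]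
    have g6 : g d2 - (g z - g d1) = ‖d2 - (z - d1)‖ := by rw [← map_sub, ← map_sub]; exact hg2
    have hb' : b = 1 - a := by linarith
    have : a ≤ 1 := by linarith
    have l1 : 1 - 2 * δ ≤ g d1 := by linarith
    have l2 : 1 - 2 * δ ≤ g d2 := by linarith
    have l3 := mul_le_mul_of_nonneg_left l1 ha
    have l4 := mul_le_mul_of_nonneg_left l2 hb
    have l5 : a * (1 - 2 * δ) + b * (1 - 2 * δ) = 1 - 2 * δ := by
      rw [← add_mul, hab, one_mul]
    linarith
  -- correction
  set κ := η * ‖e‖ with hκ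
  have hκ0 : 0 ≤ κ := by positivity
  set q := y0 - φ y0 • e with hq
  have hqN : q ∈ N' := by
    refine ⟨N.sub_mem hy0N (N.smul_mem _ heN), ?_⟩
    show φ q = 0
    simp [hq, heφ]
  have hqy : ‖q - y0‖ ≤ κ := by
    have : q - y0 = -(φ y0 • e) := by rw [hq]; abel
    rw [this, norm_neg, norm_smul, Real.norm_eq_abs]
    exact mul_le_mul_of_nonneg_right hφy0 hEn
  have hqn : ‖q‖ ≤ 1 + κ := by
    have := norm_add_le (q - y0) y0
    rw [sub_add_cancel] at this
    linarith
  set y := (1 + κ)⁻¹ • q with hy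
  have hyq : ‖y - q‖ ≤ κ := by
    have : y - q = -((κ / (1 + κ)) • q) := by
      rw [hy, ← neg_smul]
      nth_rewrite 2 [← one_smul ℝ q]
      rw [← sub_smul]; congr 1; field_simp; ring
    rw [this, norm_neg, norm_smul, Real.norm_of_nonneg (by positivity)]
    calc κ / (1 + κ) * ‖q‖ ≤ κ / (1 + κ) * (1 + κ) := by gcongr
      _ = κ := by field_simp
  have hyy0 : ‖y - y0‖ ≤ 2 * κ := by
    have := norm_add_le (y - q) (q - y0)
    rw [sub_add_sub_cancel] at this
    linarith
  have hyN : y ∈ N' := N'.smul_mem _ hqN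
  refine ⟨y, hyN, ?_, ?_, ?_⟩
  · rw [hy, norm_smul, norm_inv, Real.norm_of_nonneg (by positivity)]
    calc (1 + κ)⁻¹ * ‖q‖ ≤ (1 + κ)⁻¹ * (1 + κ) := by gcongr
      _ = 1 := by field_simp
  · have e1 : F y0 - F y ≤ s * (2 * κ) := by
      rw [← map_sub]
      have := F.le_opNorm (y0 - y)
      rw [norm_sub_rev y0 y] at this
      have e3 := mul_le_mul_of_nonneg_left hyy0 hs0
      have := le_abs_self (F (y0 - y))
      rw [Real.norm_eq_abs] at *
      linarith
    have e2 : f x ≤ s := by rw [← hF' x hx]; exact hFs x hx1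
    rw [← hF' y hyN]
    have : s * (2 * κ) = 2 * κ * s := by ring
    linarith
  · have : ‖y0 - z‖ ≤ ‖y - z‖ + ‖y - y0‖ := by
      have := norm_sub_le (y - z) (y - y0)
      rwa [sub_sub_sub_cancel_left, show y0 - z = y0 - z from rfl] at this
    linarith

lemma DPS.not_bot : ¬ DPS (⊥ : Submodule ℝ Y) := by
  intro h
  obtain ⟨y, hy, -, -, h2⟩ := h 0 0 (Submodule.zero_mem _) (by simp) 0 (1/2) (by norm_num)
  rw [Submodule.mem_bot] at hy
  subst hy
  norm_num at h2

lemma DPS.not_finite : ∀ (n : ℕ) (N : Submodule ℝ Y), DPS N → FiniteDimensional ℝ N →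
    Module.finrank ℝ N ≤ n → False := by
  intro n
  induction n with
  | zero =>
    intro N h hfd hn
    have : N = ⊥ := Submodule.finrank_eq_zero.1 (Nat.le_zero.1 hn)
    subst this
    exact DPS.not_bot h
  | succ n ih =>
    intro N h hfd hn
    by_cases hb : N = ⊥
    · subst hb; exact DPS.not_bot h
    obtain ⟨v, hv, hv0⟩ := Submodule.exists_mem_ne_zero_of_ne_bot hb
    obtain ⟨φ, -, hφ⟩ := exists_dual_vector ℝ v (norm_ne_zero_iff.2 hv0)
    have hlt : N ⊓ φ.ker < N := by
      refine lt_of_le_of_ne inf_le_left fun heq => ?_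
      have : v ∈ N ⊓ φ.ker := by rw [heq]; exact hv
      have h3 : φ v = 0 := this.2
      rw [hφ] at h3
      exact hv0 (norm_eq_zero.1 h3)
    have hfd' : FiniteDimensional ℝ ↥(N ⊓ φ.ker) := Submodule.finiteDimensional_of_le hlt.le
    have := Submodule.finrank_lt_finrank_of_lt hlt
    exact ih _ (h.inf_ker φ) hfd' (by omega)

lemma DPS.exists_functional {N : Submodule ℝ Y} (h : DPS N) {S : Set Y} (hS : S.Finite) :
    ∃ v ∈ N, ∃ φ : Y →L[ℝ] ℝ, ‖v‖ ≤ 1 / 10 ∧ φ v = 1 ∧ ∀ x ∈ S, φ x = 0 := by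
  set W := Submodule.span ℝ S with hW
  have hWf : FiniteDimensional ℝ W := FiniteDimensional.span_of_finite ℝ hS
  have : ¬ N ≤ W := fun hle =>
    DPS.not_finite _ N h (Submodule.finiteDimensional_of_le hle) le_rfl
  obtain ⟨v, hvN, hvW⟩ := SetLike.not_le_iff_exists.1 this
  obtain ⟨f, u, hu1, hu2⟩ := geometric_hahn_banach_closed_point (s := (W : Set Y)) W.convex
    W.closed_of_finiteDimensional hvW
  have hf0 : ∀ w ∈ W, f w = 0 := by
    intro w hw
    by_contra hne
    have := hu1 ((u / f w) • w) (W.smul_mem _ hw)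
    simp [hne] at this
  have hu0 : 0 < u := by simpa using hu1 0 W.zero_mem
  have hfv : 0 < f v := hu0.trans hu2
  have hc : 0 < 10 * (‖v‖ + 1) := by positivity
  refine ⟨(10 * (‖v‖ + 1))⁻¹ • v, N.smul_mem _ hvN, (10 * (‖v‖ + 1) / f v) • f, ?_, ?_, ?_⟩
  · rw [norm_smul, norm_inv, Real.norm_of_nonneg hc.le, inv_mul_eq_div, div_le_iff₀ hc]
    linarith
  · simp; field_simp
  · intro x hx
    simp [hf0 x (Submodule.subset_span hx)]

lemma DPS.exists_finite {N : Submodule ℝ Y} (h : DPS N) {x : Y} (hx : x ∈ N) (hx1 : ‖x‖ ≤ 1)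
    (z : Y) {ε : ℝ} (hε : 0 < ε) :
    ∃ T : Set Y, T.Finite ∧ (∀ y ∈ T, y ∈ N ∧ ‖y‖ ≤ 1 ∧ 1 + ‖z‖ - ε < ‖y - z‖) ∧
      ∀ f : Y →L[ℝ] ℝ, ∃ y ∈ T, f x - ε * ‖f‖ ≤ f y := by
  set D : Set Y := {y | y ∈ N ∧ ‖y‖ ≤ 1 ∧ 1 + ‖z‖ - ε < ‖y - z‖} with hD
  have hmem : x ∈ closure (convexHull ℝ D) := by
    by_contra hn
    obtain ⟨f, u, hu1, hu2⟩ := geometric_hahn_banach_closed_point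
      (convex_convexHull ℝ D).closure isClosed_closure hn
    obtain ⟨y, hyN, hy1, hy2, hy3⟩ := h z x hx hx1 f (min ε (f x - u))
      (lt_min hε (by linarith))
    have m1 := min_le_left ε (f x - u)
    have m2 := min_le_right ε (f x - u)
    have := hu1 y (subset_closure (subset_convexHull ℝ D ⟨hyN, hy1, by linarith⟩))
    linarith
  obtain ⟨p, hp, hpx⟩ := Metric.mem_closure_iff.1 hmem ε hε
  rw [convexHull_eq_union_convexHull_finite_subsets] at hp
  simp only [mem_iUnion] at hp
  obtain ⟨T, hTD, hpT⟩ := hp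
  refine ⟨T, T.finite_toSet, fun y hy => hTD hy, fun f => ?_⟩
  by_contra hcon
  push Not at hcon
  have hsub : convexHull ℝ (T : Set Y) ⊆ {w | f w < f x - ε * ‖f‖} :=
    convexHull_min hcon (convex_halfSpace_lt f.toLinearMap.isLinear _)
  have h1 : f p < f x - ε * ‖f‖ := hsub hpT
  have h2 := f.le_opNorm (x - p)
  rw [← dist_eq_norm, map_sub] at h2
  have h3 := mul_le_mul_of_nonneg_left hpx.le (norm_nonneg f)
  have h4 := le_abs_self (f x - f p)
  rw [Real.norm_eq_abs] at h2
  linarith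

/-- State of the inductive construction. -/
structure DState (Y : Type*) [NormedAddCommGroup Y] [NormedSpace ℝ Y] where
  N : Submodule ℝ Y
  A : Set Y
  V : Set Y
  Z : Set Y
  dps : DPS N
  finA : A.Finite
  finV : V.Finite
  finZ : Z.Finite
  subN : ∀ x ∈ A, x ∈ N
  le1 : ∀ x ∈ A, ‖x‖ ≤ 1

/-- The relation between consecutive states. -/
structure DStep (ε : ℝ) (s s' : DState Y) (v : Y) (φ : Y →L[ℝ] ℝ) : Prop where
  monoA : s.A ⊆ s'.A
  negA : ∀ x ∈ s.A, -x ∈ s'.A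
  monoZ : s.Z ⊆ s'.Z
  subZ : ∀ z ∈ s.Z, ∀ y ∈ s.A, z - y ∈ s'.Z
  monoV : s.V ⊆ s'.V
  memV : v ∈ s'.V
  memN : v ∈ s.N
  antiN : s'.N ≤ s.N
  kerN : ∀ x ∈ s'.N, φ x = 0
  kerV : ∀ x ∈ s.V, φ x = 0
  one : φ v = 1
  small : ‖v‖ ≤ 1 / 10
  approx : ∀ x ∈ s.A, ∀ z ∈ s.Z, ∀ f : Y →L[ℝ] ℝ, ∃ y ∈ s'.A, f x - ε * ‖f‖ ≤ f y ∧
    1 + ‖z‖ - ε < ‖y - z‖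

lemma DState.exists_step (s : DState Y) {ε : ℝ} (hε : 0 < ε) :
    ∃ (s' : DState Y) (v : Y) (φ : Y →L[ℝ] ℝ), DStep ε s s' v φ := by
  obtain ⟨v, hv, φ, hv1, hφv, hφ⟩ := s.dps.exists_functional (s.finA.union s.finV)
  have hD := s.dps.inf_ker φ
  have hA : ∀ x ∈ s.A, x ∈ s.N ⊓ φ.ker := fun x hx => ⟨s.subN x hx, hφ x (Or.inl hx)⟩
  have key : ∀ x : Y, ∀ z : Y, ∃ T : Set Y, T.Finite ∧
      (∀ y ∈ T, y ∈ s.N ⊓ φ.ker ∧ ‖y‖ ≤ 1 ∧ 1 + ‖z‖ - ε < ‖y - z‖) ∧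
      (x ∈ s.A → ∀ f : Y →L[ℝ] ℝ, ∃ y ∈ T, f x - ε * ‖f‖ ≤ f y) := by
    intro x z
    by_cases hx : x ∈ s.A
    · obtain ⟨T, h1, h2, h3⟩ := hD.exists_finite (hA x hx) (s.le1 x hx) z hε
      exact ⟨T, h1, h2, fun _ => h3⟩
    · exact ⟨∅, finite_empty, by simp, fun h => absurd h hx⟩
  choose T hT1 hT2 hT3 using key
  have hmemA : ∀ x ∈ (s.A ∪ -s.A) ∪ ⋃ x ∈ s.A, ⋃ z ∈ s.Z, T x z, x ∈ s.N ⊓ φ.ker ∧ ‖x‖ ≤ 1 := by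
    rintro x ((hx | hx) | hx)
    · exact ⟨hA x hx, s.le1 x hx⟩
    · refine ⟨?_, ?_⟩
      · have := (s.N ⊓ φ.ker).neg_mem (hA _ hx)
        rwa [neg_neg] at this
      · have := s.le1 _ hx
        rwa [norm_neg] at this
    · simp only [mem_iUnion] at hx
      obtain ⟨a, -, z, -, hx⟩ := hx
      exact ⟨(hT2 a z x hx).1, (hT2 a z x hx).2.1⟩
  refine ⟨{ N := s.N ⊓ φ.ker
            A := (s.A ∪ -s.A) ∪ ⋃ x ∈ s.A, ⋃ z ∈ s.Z, T x z
            V := s.V ∪ {v}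
            Z := s.Z ∪ (s.Z - s.A)
            dps := hD
            finA := (s.finA.union s.finA.neg).union
              (s.finA.biUnion fun x _ => s.finZ.biUnion fun z _ => hT1 x z)
            finV := s.finV.union (finite_singleton v)
            finZ := s.finZ.union (s.finZ.sub s.finA)
            subN := fun x hx => (hmemA x hx).1
            le1 := fun x hx => (hmemA x hx).2 }, v, φ, ?_⟩
  refine ⟨fun x hx => Or.inl (Or.inl hx), fun x hx => Or.inl (Or.inr (by simpa using hx)),
    fun x hx => Or.inl hx, fun z hz y hy => Or.inr (sub_mem_sub hz hy),
    fun x hx => Or.inl hx, Or.inr rfl, hv, inf_le_left, fun x hx => hx.2,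
    fun x hx => hφ x (Or.inr hx), hφv, hv1, ?_⟩
  intro x hx z hz f
  obtain ⟨y, hy, hy'⟩ := hT3 x z hx f
  refine ⟨y, Or.inr ?_, hy', (hT2 x z y hy).2.2⟩
  simp only [mem_iUnion]
  exact ⟨x, hx, z, hz, hy⟩

lemma exists_system (h : DPS (⊤ : Submodule ℝ Y)) :
    ∃ (A Z : Set Y) (u : ℕ → Y) (φ : ℕ → Y →L[ℝ] ℝ),
      A.Countable ∧ A.Nonempty ∧ (∀ x ∈ A, ‖x‖ ≤ 1) ∧ (∀ x ∈ A, -x ∈ A) ∧ (0 : Y) ∈ Z ∧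
      (∀ z ∈ Z, ∀ y ∈ A, z - y ∈ Z) ∧ (∀ n, ∀ x ∈ A, φ n x = 0) ∧
      (∀ n, φ n (u n) = 1) ∧ (∀ n m, n ≠ m → φ n (u m) = 0) ∧ (∀ n, ‖u n‖ ≤ 1 / 10) ∧
      (∀ x ∈ A, ∀ z ∈ Z, ∀ f : Y →L[ℝ] ℝ, ∀ ε : ℝ, 0 < ε →
        ∃ y ∈ A, f x - ε < f y ∧ 1 + ‖z‖ - ε < ‖y - z‖) := by
  have step : ∀ (n : ℕ) (s : DState Y), ∃ (s' : DState Y) (v : Y) (φ : Y →L[ℝ] ℝ),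
      DStep (1 / ((n : ℝ) + 1)) s s' v φ := fun n s => s.exists_step (by positivity)
  choose nxt vv ff hstep using step
  let s0 : DState Y :=
    { N := ⊤, A := {0}, V := ∅, Z := {0}, dps := h, finA := finite_singleton _,
      finV := finite_empty, finZ := finite_singleton _, subN := fun _ _ => trivial,
      le1 := by simp }
  let S : ℕ → DState Y := fun n => Nat.rec s0 (fun n s => nxt n s) n
  have hS : ∀ n : ℕ, DStep (1 / ((n : ℝ) + 1)) (S n) (S (n + 1)) (vv n (S n)) (ff n (S n)) :=
    fun n => hstep n (S n)
  have mA : Monotone fun n => (S n).A := monotone_nat_of_le_succ fun n => (hS n).monoA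
  have mZ : Monotone fun n => (S n).Z := monotone_nat_of_le_succ fun n => (hS n).monoZ
  have mV : Monotone fun n => (S n).V := monotone_nat_of_le_succ fun n => (hS n).monoV
  have mN : Antitone fun n => (S n).N := antitone_nat_of_succ_le fun n => (hS n).antiN
  refine ⟨⋃ n, (S n).A, ⋃ n, (S n).Z, fun n => vv n (S n), fun n => ff n (S n),
    countable_iUnion fun n => (S n).finA.countable, ⟨0, mem_iUnion.2 ⟨0, rfl⟩⟩, ?_, ?_,
    mem_iUnion.2 ⟨0, rfl⟩, ?_, ?_, fun n => (hS n).one, ?_, fun n => (hS n).small, ?_⟩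
  · intro x hx
    obtain ⟨n, hx⟩ := mem_iUnion.1 hx
    exact (S n).le1 x hx
  · intro x hx
    obtain ⟨n, hx⟩ := mem_iUnion.1 hx
    exact mem_iUnion.2 ⟨n + 1, (hS n).negA x hx⟩
  · intro z hz y hy
    obtain ⟨n, hz⟩ := mem_iUnion.1 hz
    obtain ⟨m, hy⟩ := mem_iUnion.1 hy
    exact mem_iUnion.2 ⟨max n m + 1, (hS _).subZ z (mZ (le_max_left n m) hz) y
      (mA (le_max_right n m) hy)⟩
  · intro n x hx
    obtain ⟨m, hx⟩ := mem_iUnion.1 hx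
    have h1 : x ∈ (S (max m (n + 1))).A := mA (le_max_left _ _) hx
    have h2 := (S _).subN x h1
    exact (hS n).kerN x (mN (le_max_right _ _) h2)
  · intro n m hnm
    rcases lt_or_gt_of_ne hnm with hlt | hlt
    · exact (hS n).kerN _ (mN (show n + 1 ≤ m from hlt) (hS m).memN)
    · exact (hS n).kerV _ (mV (show m + 1 ≤ n from hlt) (hS m).memV)
  · intro x hx z hz f ε hε
    obtain ⟨n, hx⟩ := mem_iUnion.1 hx
    obtain ⟨m, hz⟩ := mem_iUnion.1 hz
    have hf := norm_nonneg f
    obtain ⟨k, hk⟩ := exists_nat_one_div_lt (show 0 < ε / (‖f‖ + 1) by positivity)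
    set l := max k (max n m) with hl
    have hkl : (k : ℝ) ≤ l := by exact_mod_cast le_max_left _ _
    have h1 : 1 / ((l : ℝ) + 1) < ε / (‖f‖ + 1) := lt_of_le_of_lt (by gcongr) hk
    rw [lt_div_iff₀ (by positivity)] at h1
    have h0 : 0 < 1 / ((l : ℝ) + 1) := by positivity
    obtain ⟨y, hy, hy1, hy2⟩ := (hS l).approx x
      (mA ((le_max_left n m).trans (le_max_right _ _)) hx) z
      (mZ ((le_max_right n m).trans (le_max_right _ _)) hz) f
    refine ⟨y, mem_iUnion.2 ⟨l + 1, hy⟩, ?_, ?_⟩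
    · nlinarith
    · nlinarith

/-- Closed absolutely convex hull. -/
def absHull (P : Set Y) : Set Y := closure (convexHull ℝ (P ∪ -P))

lemma absHull_convex (P : Set Y) : Convex ℝ (absHull P) := (convex_convexHull ℝ _).closure

lemma absHull_closed (P : Set Y) : IsClosed (absHull P) := isClosed_closure

lemma absHull_neg (P : Set Y) : absHull P = -absHull P := by
  have h : P ∪ -P = -(P ∪ -P) := by rw [Set.union_neg, neg_neg, union_comm]
  unfold absHull
  rw [neg_closure, ← convexHull_neg, ← h]

lemma subset_absHull (P : Set Y) : P ⊆ absHull P := fun _ hx =>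
  subset_closure (subset_convexHull ℝ _ (Or.inl hx))

lemma neg_mem_absHull {P : Set Y} {x : Y} (hx : x ∈ absHull P) : -x ∈ absHull P := by
  rw [absHull_neg]; simpa using hx

lemma absHull_min {P S : Set Y} (h1 : ∀ x ∈ P, x ∈ S) (h2 : ∀ x ∈ P, -x ∈ S) (hc : Convex ℝ S)
    (hcl : IsClosed S) : absHull P ⊆ S := by
  refine closure_minimal (convexHull_min ?_ hc) hcl
  rintro x (hx | hx)
  · exact h1 x hx
  · have := h2 _ hx
    rwa [neg_neg] at this

lemma absHull_norm_le {P : Set Y} {R : ℝ} (h : ∀ x ∈ P, ‖x‖ ≤ R) {x : Y} (hx : x ∈ absHull P) :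
    ‖x‖ ≤ R := by
  have : absHull P ⊆ Metric.closedBall 0 R :=
    absHull_min (fun x hx => by simpa using h x hx) (fun x hx => by simpa using h x hx)
      (convex_closedBall _ _) Metric.isClosed_closedBall
  simpa using this hx

lemma absHull_apply_le {P : Set Y} {f : Y →L[ℝ] ℝ} {R : ℝ} (h : ∀ x ∈ P, |f x| ≤ R) {x : Y}
    (hx : x ∈ absHull P) : f x ≤ R := by
  have : absHull P ⊆ {w | f w ≤ R} :=
    absHull_min (fun x hx => (abs_le.1 (h x hx)).2)
      (fun x hx => by have := (abs_le.1 (h x hx)).1; show f (-x) ≤ R; rw [map_neg]; linarith)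
      (convex_halfSpace_le f.toLinearMap.isLinear _) (isClosed_le f.continuous continuous_const)
  exact this hx

lemma isSCD_absHull {ι : Type*} [Countable ι] [Nonempty ι] (p : ι → Y) (g : ι → Y →L[ℝ] ℝ)
    (R : ℝ) (hR : ∀ i, ‖p i‖ ≤ R) (h1 : ∀ i, g i (p i) = 1) (h0 : ∀ i j, i ≠ j → g i (p j) = 0) :
    IsSCD (absHull (range p)) := by
  set C := absHull (range p) with hC
  have hR0 : 0 ≤ R := (norm_nonneg _).trans (hR (Classical.arbitrary ι))
  have hpC : ∀ i, p i ∈ C := fun i => subset_absHull _ (mem_range_self i)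
  have hgle : ∀ i, ∀ x ∈ range p, |g i x| ≤ 1 := by
    rintro i _ ⟨j, rfl⟩
    by_cases hij : i = j
    · subst hij; simp [h1]
    · simp [h0 i j hij]
  have hdist : ∀ i, ∀ c ∈ C, ‖c - p i‖ ≤ 2 * R * (1 - g i c) := by
    intro i
    have : C ⊆ {c | ‖c - p i‖ ≤ 2 * R * (1 - g i c)} := by
      apply absHull_min
      · rintro _ ⟨j, rfl⟩
        by_cases hij : i = j
        · subst hij; simp [h1]
        · have := norm_sub_le (p j) (p i)
          have := hR i
          have := hR j
          simp only [mem_ofPred_eq, h0 i j hij]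
          linarith
      · rintro _ ⟨j, rfl⟩
        have := norm_sub_le (-p j) (p i)
        have := hR i
        have := hR j
        rw [norm_neg] at *
        by_cases hij : i = j
        · subst hij
          simp only [mem_ofPred_eq, map_neg, h1]
          linarith
        · simp only [mem_ofPred_eq, map_neg, h0 i j hij]
          linarith
      · intro x hx y hy a b ha hb hab
        simp only [mem_ofPred_eq] at *
        have e : a • x + b • y - p i = a • (x - p i) + b • (y - p i) := by
          have : p i = (a + b) • p i := by rw [hab, one_smul]
          nth_rewrite 1 [this]
          rw [add_smul, smul_sub, smul_sub]; abel
        rw [e]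
        have l1 := norm_add_le (a • (x - p i)) (b • (y - p i))
        rw [norm_smul, norm_smul, Real.norm_of_nonneg ha, Real.norm_of_nonneg hb] at l1
        have l2 := mul_le_mul_of_nonneg_left hx ha
        have l3 := mul_le_mul_of_nonneg_left hy hb
        have l4 : a * (2 * R * (1 - g i x)) + b * (2 * R * (1 - g i y)) =
            2 * R * ((a + b) - g i (a • x + b • y)) := by
          simp only [map_add, map_smul, smul_eq_mul]; ring
        rw [hab] at l4
        linarith
      · exact isClosed_le (by fun_prop) (by fun_prop)
    exact fun c hc => this hc
  -- suprema
  have hsup : ∀ i, sSup (g i '' C) = 1 := by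
    intro i
    apply le_antisymm
    · apply csSup_le ⟨_, mem_image_of_mem _ (hpC i)⟩
      rintro _ ⟨c, hc, rfl⟩
      exact absHull_apply_le (hgle i) hc
    · rw [← h1 i]
      refine le_csSup ⟨1, ?_⟩ (mem_image_of_mem _ (hpC i))
      rintro _ ⟨c, hc, rfl⟩
      exact absHull_apply_le (hgle i) hc
  have hsup' : ∀ i, sSup ((-g i) '' C) = 1 := by
    intro i
    have : (-g i) '' C = g i '' C := by
      ext t
      constructor
      · rintro ⟨c, hc, rfl⟩
        exact ⟨-c, neg_mem_absHull hc, by simp⟩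
      · rintro ⟨c, hc, rfl⟩
        exact ⟨-c, neg_mem_absHull hc, by simp⟩
    rw [this, hsup]
  have hg0 : ∀ i, g i ≠ 0 := fun i h => by
    have := h1 i
    rw [h] at this
    simp at this
  obtain ⟨e, he⟩ := exists_surjective_nat (ι × ℕ × Bool)
  let W : ι × ℕ × Bool → Set Y := fun t =>
    sliceSet C (if t.2.2 then g t.1 else - g t.1) (1 / ((t.2.1 : ℝ) + 1))
  refine ⟨fun n => W (e n), ?_, ?_⟩
  · intro n
    show IsSlice C (W (e n))
    obtain ⟨i, l, s⟩ := e n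
    have hl : (0 : ℝ) < 1 / ((l : ℝ) + 1) := by positivity
    cases s
    · refine ⟨⟨-p i, neg_mem_absHull (hpC i), ?_⟩, -g i, neg_ne_zero.2 (hg0 i), _, hl, rfl⟩
      simp only [Bool.false_eq_true, if_false]
      rw [hsup']
      simp only [_root_.neg_apply, map_neg, neg_neg, h1]
      linarith
    · refine ⟨⟨p i, hpC i, ?_⟩, g i, hg0 i, _, hl, rfl⟩
      simp only [if_true]
      rw [hsup, h1]
      linarith
  · intro B hB
    have hB' : ∀ t, (B ∩ W t).Nonempty := fun t => by
      obtain ⟨n, rfl⟩ := he t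
      exact hB n
    have hr : ∀ ε : ℝ, 0 < ε → ∃ l : ℕ, 2 * R * (1 / ((l : ℝ) + 1)) < ε := by
      intro ε hε
      obtain ⟨l, hl⟩ := exists_nat_one_div_lt (show 0 < ε / (2 * R + 1) by positivity)
      refine ⟨l, ?_⟩
      rw [lt_div_iff₀ (by positivity)] at hl
      have : (0 : ℝ) < 1 / ((l : ℝ) + 1) := by positivity
      nlinarith
    have c1 : ∀ i, p i ∈ closure B := by
      intro i
      rw [Metric.mem_closure_iff]
      intro ε hε
      obtain ⟨l, hl⟩ := hr ε hε
      obtain ⟨b, hb, hbC, hb2⟩ := hB' (i, l, true)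
      simp only [if_true] at hb2
      rw [hsup] at hb2
      refine ⟨b, hb, ?_⟩
      rw [dist_comm, dist_eq_norm]
      have := hdist i b hbC
      have : 2 * R * (1 - g i b) ≤ 2 * R * (1 / ((l : ℝ) + 1)) := by
        apply mul_le_mul_of_nonneg_left _ (by positivity); linarith
      linarith
    have c2 : ∀ i, -p i ∈ closure B := by
      intro i
      rw [Metric.mem_closure_iff]
      intro ε hε
      obtain ⟨l, hl⟩ := hr ε hε
      obtain ⟨b, hb, hbC, hb2⟩ := hB' (i, l, false)
      simp only [Bool.false_eq_true, if_false] at hb2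
      rw [hsup'] at hb2
      refine ⟨b, hb, ?_⟩
      rw [dist_comm, dist_eq_norm]
      have h3 := hdist i (-b) (neg_mem_absHull hbC)
      have h4 : -b - p i = -(b - -p i) := by abel
      rw [h4, norm_neg, map_neg] at h3
      rw [_root_.neg_apply] at hb2
      have : 2 * R * (1 - -g i b) ≤ 2 * R * (1 / ((l : ℝ) + 1)) := by
        apply mul_le_mul_of_nonneg_left _ (by positivity); linarith
      linarith
    have hsub : closure B ⊆ closure (convexHull ℝ B) := closure_mono (subset_convexHull ℝ B)
    apply absHull_min
    · rintro _ ⟨i, rfl⟩; exact hsub (c1 i)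
    · rintro _ ⟨i, rfl⟩; exact hsub (c2 i)
    · exact (convex_convexHull ℝ B).closure
    · exact isClosed_closure

/-- The generating points of the sets. -/
noncomputable def pt (x a b : ℕ → Y) (t : ℕ × ℕ × ℕ) : Y :=
  x t.2.1 + ((1 - 1 / ((t.2.2 : ℝ) + 2)) • a t.1 +
    (1 / ((t.2.2 : ℝ) + 2)) • b (Encodable.encode t))

/-- The sets. -/
def CC (x a b : ℕ → Y) : Set Y := absHull (range (pt x a b))

lemma cm_bounds (m : ℕ) : 0 < 1 / ((m : ℝ) + 2) ∧ 1 / ((m : ℝ) + 2) ≤ 1 := by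
  refine ⟨by positivity, ?_⟩
  rw [div_le_one (by positivity)]
  have : (0 : ℝ) ≤ m := Nat.cast_nonneg m
  linarith

lemma pt_norm_le {x a b : ℕ → Y} (hx : ∀ k, ‖x k‖ ≤ 1) (ha : ∀ k, ‖a k‖ ≤ 1 / 10)
    (hb : ∀ k, ‖b k‖ ≤ 1 / 10) (t : ℕ × ℕ × ℕ) : ‖pt x a b t‖ ≤ 11 / 10 := by
  obtain ⟨c1, c2⟩ := cm_bounds t.2.2
  unfold pt
  set c := 1 / ((t.2.2 : ℝ) + 2)
  have l1 := norm_add_le (x t.2.1) ((1 - c) • a t.1 + c • b (Encodable.encode t))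
  have l2 := norm_add_le ((1 - c) • a t.1) (c • b (Encodable.encode t))
  rw [norm_smul, norm_smul, Real.norm_of_nonneg c1.le, Real.norm_of_nonneg (by linarith)] at l2
  have := hx t.2.1
  have l3 := mul_le_mul_of_nonneg_left (ha t.1) (show 0 ≤ 1 - c by linarith)
  have l4 := mul_le_mul_of_nonneg_left (hb (Encodable.encode t)) c1.le
  linarith

lemma CC_norm_le {x a b : ℕ → Y} (hx : ∀ k, ‖x k‖ ≤ 1) (ha : ∀ k, ‖a k‖ ≤ 1 / 10)
    (hb : ∀ k, ‖b k‖ ≤ 1 / 10) {c : Y} (hc : c ∈ CC x a b) : ‖c‖ ≤ 11 / 10 :=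
  absHull_norm_le (by rintro _ ⟨t, rfl⟩; exact pt_norm_le hx ha hb t) hc

lemma CC_isSCD {x a b : ℕ → Y} (hx : ∀ k, ‖x k‖ ≤ 1) (ha : ∀ k, ‖a k‖ ≤ 1 / 10)
    (hb : ∀ k, ‖b k‖ ≤ 1 / 10) (φ : ℕ → Y →L[ℝ] ℝ) (hφx : ∀ n k, φ n (x k) = 0)
    (hφa : ∀ n k, φ n (a k) = 0) (hφb : ∀ n, φ n (b n) = 1)
    (hφb' : ∀ n m, n ≠ m → φ n (b m) = 0) : IsSCD (CC x a b) := by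
  refine isSCD_absHull (pt x a b) (fun t => ((t.2.2 : ℝ) + 2) • φ (Encodable.encode t)) (11 / 10)
    (pt_norm_le hx ha hb) ?_ ?_
  · intro t
    have : (0 : ℝ) < (t.2.2 : ℝ) + 2 := by positivity
    simp only [pt, _root_.smul_apply, map_add, map_smul, hφx, hφa, hφb, smul_eq_mul]
    field_simp
    simp
  · intro t t' htt
    have : Encodable.encode t ≠ Encodable.encode t' := fun h => htt (Encodable.encode_injective h)
    simp only [pt, _root_.smul_apply, map_add, map_smul, hφx, hφa, hφb' _ _ this, smul_eq_mul]
    simp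

lemma CC_add_mem (x a b : ℕ → Y) (hb : ∀ k, ‖b k‖ ≤ 1 / 10)
    (ha : ∀ k, ‖a k‖ ≤ 1 / 10) (i k : ℕ) : x k + a i ∈ CC x a b := by
  have hcl := absHull_closed (range (pt x a b))
  show x k + a i ∈ absHull (range (pt x a b))
  rw [← hcl.closure_eq, Metric.mem_closure_iff]
  intro ε hε
  obtain ⟨m, hm⟩ := exists_nat_one_div_lt hε
  refine ⟨pt x a b (i, k, m), subset_absHull _ (mem_range_self _), ?_⟩
  rw [dist_eq_norm]
  obtain ⟨c1, c2⟩ := cm_bounds m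
  have hc : 1 / ((m : ℝ) + 2) ≤ 1 / ((m : ℝ) + 1) := by gcongr; norm_num
  unfold pt
  set c := 1 / ((m : ℝ) + 2)
  have e : x k + a i - (x k + ((1 - c) • a i + c • b (Encodable.encode (i, k, m)))) =
      c • (a i - b (Encodable.encode (i, k, m))) := by
    rw [sub_smul, one_smul, smul_sub]; abel
  rw [e, norm_smul, Real.norm_of_nonneg c1.le]
  have l1 := norm_sub_le (a i) (b (Encodable.encode (i, k, m)))
  have := ha i
  have := hb (Encodable.encode (i, k, m))
  have l2 : ‖a i - b (Encodable.encode (i, k, m))‖ ≤ 1 := by linarith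
  have := mul_le_mul_of_nonneg_left l2 c1.le
  linarith

lemma CC_peak {x a b : ℕ → Y} (hx : ∀ k, ‖x k‖ ≤ 1) (ha : ∀ k, ‖a k‖ ≤ 1 / 10)
    (hb : ∀ k, ‖b k‖ ≤ 1 / 10) (hneg : ∀ k, ∃ l, x l = -x k) (f : Y →L[ℝ] ℝ)
    (hM : (⨆ k, |f (b k)|) ≤ ⨆ k, |f (a k)|) {ε : ℝ} (hε : 0 < ε) :
    ∃ k, ∃ a' : Y, ‖a'‖ ≤ 1 / 10 ∧ (∀ l, x l + a' ∈ CC x a b) ∧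
      ∀ c ∈ CC x a b, f c ≤ f (x k) + f a' + ε := by
  have bd : ∀ v : ℕ → Y, (∀ k, ‖v k‖ ≤ 1) → BddAbove (range fun k => |f (v k)|) := by
    intro v hv
    refine ⟨‖f‖, ?_⟩
    rintro _ ⟨k, rfl⟩
    exact abs_apply_le_of_norm_le_one le_rfl (hv k)
  have bda := bd a fun k => (ha k).trans (by norm_num)
  have bdb := bd b fun k => (hb k).trans (by norm_num)
  have bdx := bd x hx
  set M := ⨆ k, |f (a k)| with hMdef
  set s := ⨆ k, |f (x k)| with hsdef
  obtain ⟨i, hi⟩ := exists_lt_of_lt_ciSup (show M - ε / 2 < ⨆ k, |f (a k)| by linarith)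
  obtain ⟨k0, hk0⟩ := exists_lt_of_lt_ciSup (show s - ε / 2 < ⨆ k, |f (x k)| by linarith)
  obtain ⟨k, hk⟩ : ∃ k, s - ε / 2 < f (x k) := by
    rcases le_total 0 (f (x k0)) with h0 | h0
    · exact ⟨k0, by rwa [abs_of_nonneg h0] at hk0⟩
    · obtain ⟨l, hl⟩ := hneg k0
      exact ⟨l, by rwa [hl, map_neg, ← abs_of_nonpos h0]⟩
  have hub : ∀ c ∈ CC x a b, f c ≤ s + M := by
    intro c hc
    refine absHull_apply_le ?_ hc
    rintro _ ⟨t, rfl⟩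
    obtain ⟨c1, c2⟩ := cm_bounds t.2.2
    unfold pt
    set c := 1 / ((t.2.2 : ℝ) + 2)
    have s1 : |f (x t.2.1)| ≤ s := le_ciSup bdx _
    have s2 : |f (a t.1)| ≤ M := le_ciSup bda _
    have s3 : |f (b (Encodable.encode t))| ≤ M := (le_ciSup bdb _).trans hM
    simp only [map_add, map_smul, smul_eq_mul]
    have l1 := abs_add_le (f (x t.2.1)) ((1 - c) * f (a t.1) + c * f (b (Encodable.encode t)))
    have l2 := abs_add_le ((1 - c) * f (a t.1)) (c * f (b (Encodable.encode t)))
    rw [abs_mul, abs_mul, abs_of_nonneg c1.le, abs_of_nonneg (show 0 ≤ 1 - c by linarith)] at l2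
    have l3 := mul_le_mul_of_nonneg_left s2 (show 0 ≤ 1 - c by linarith)
    have l4 := mul_le_mul_of_nonneg_left s3 c1.le
    linarith
  rcases le_total 0 (f (a i)) with h0 | h0
  · refine ⟨k, a i, ha i, fun l => CC_add_mem x a b hb ha i l, fun c hc => ?_⟩
    rw [abs_of_nonneg h0] at hi
    have := hub c hc
    linarith
  · refine ⟨k, -a i, by rw [norm_neg]; exact ha i, fun l => ?_, fun c hc => ?_⟩
    · obtain ⟨l', hl'⟩ := hneg l
      have := neg_mem_absHull (CC_add_mem x a b hb ha i l')
      rw [hl'] at this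
      have e : x l + -a i = -(-x l + a i) := by abel
      rw [e]; exact this
    · rw [abs_of_nonpos h0] at hi
      have := hub c hc
      rw [map_neg]
      linarith

lemma CC_sum_slice_aux {x a b : ℕ → Y} (hx : ∀ k, ‖x k‖ ≤ 1) (ha : ∀ k, ‖a k‖ ≤ 1 / 10)
    (hb : ∀ k, ‖b k‖ ≤ 1 / 10) (hneg : ∀ k, ∃ l, x l = -x k) (f : Y →L[ℝ] ℝ)
    (hM : (⨆ k, |f (b k)|) ≤ ⨆ k, |f (a k)|) {ε : ℝ} (hε : 0 < ε) :
    ∃ k, ∃ r : Y, ‖r‖ ≤ 12 / 10 ∧ ∀ l, f (x k) - ε / 4 < f (x l) →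
      x l + r ∈ sliceSet (CC x a b + CC x b a) f ε := by
  obtain ⟨k, a', ha', h1, h2⟩ := CC_peak hx ha hb hneg f hM (show 0 < ε / 4 by positivity)
  have hne : (f '' CC x b a).Nonempty := ⟨_, mem_image_of_mem _ (CC_add_mem x b a ha hb 0 0)⟩
  have hbd : BddAbove (f '' CC x b a) := by
    refine ⟨‖f‖ * (11 / 10), ?_⟩
    rintro _ ⟨c, hc, rfl⟩
    have l1 := f.le_opNorm c
    have l2 := mul_le_mul_of_nonneg_left (CC_norm_le hx hb ha hc) (norm_nonneg f)
    have := le_abs_self (f c)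
    rw [Real.norm_eq_abs] at l1
    linarith
  obtain ⟨_, ⟨c2, hc2, rfl⟩, hc2'⟩ := exists_lt_of_lt_csSup hne
    (show sSup (f '' CC x b a) - ε / 4 < sSup (f '' CC x b a) by linarith)
  refine ⟨k, a' + c2, ?_, ?_⟩
  · have := norm_add_le a' c2
    have := CC_norm_le hx hb ha hc2
    linarith
  · intro l hl
    rw [← add_assoc]
    refine ⟨add_mem_add (h1 l) hc2, ?_⟩
    have hS : sSup (f '' (CC x a b + CC x b a)) ≤ f (x k) + f a' + ε / 4 + (f c2 + ε / 4) := by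
      apply csSup_le ⟨_, mem_image_of_mem _ (add_mem_add (h1 l) hc2)⟩
      rintro _ ⟨_, ⟨c, hc, d, hd, rfl⟩, rfl⟩
      have l1 := h2 c hc
      have l2 := le_csSup hbd (mem_image_of_mem _ hd)
      simp only [map_add]
      linarith
    simp only [map_add]
    linarith

lemma CC_sum_slice {x a b : ℕ → Y} (hx : ∀ k, ‖x k‖ ≤ 1) (ha : ∀ k, ‖a k‖ ≤ 1 / 10)
    (hb : ∀ k, ‖b k‖ ≤ 1 / 10) (hneg : ∀ k, ∃ l, x l = -x k) (f : Y →L[ℝ] ℝ)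
    {ε : ℝ} (hε : 0 < ε) :
    ∃ k, ∃ r : Y, ‖r‖ ≤ 12 / 10 ∧ ∀ l, f (x k) - ε / 4 < f (x l) →
      x l + r ∈ sliceSet (CC x a b + CC x b a) f ε := by
  rcases le_total (⨆ k, |f (b k)|) (⨆ k, |f (a k)|) with hM | hM
  · exact CC_sum_slice_aux hx ha hb hneg f hM hε
  · rw [add_comm (CC x a b)]
    exact CC_sum_slice_aux hx hb ha hneg f hM hε

lemma CC_sum_not_SCD {x a b : ℕ → Y} (Z : Set Y) (hx : ∀ k, ‖x k‖ ≤ 1)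
    (ha : ∀ k, ‖a k‖ ≤ 1 / 10)
    (hb : ∀ k, ‖b k‖ ≤ 1 / 10) (hneg : ∀ k, ∃ l, x l = -x k) (hZ0 : (0 : Y) ∈ Z)
    (hZ : ∀ z ∈ Z, ∀ k, z - x k ∈ Z)
    (hstar : ∀ k, ∀ z ∈ Z, ∀ f : Y →L[ℝ] ℝ, ∀ ε : ℝ, 0 < ε →
        ∃ l, f (x k) - ε < f (x l) ∧ 1 + ‖z‖ - ε < ‖x l - z‖) :
    ¬ IsSCD (CC x a b + CC x b a) := by
  rintro ⟨V, hV, hdet⟩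
  choose hVn f hf ε hε hVeq using hV
  choose K r hr hslice using fun n => CC_sum_slice hx ha hb hneg (f n) (hε n)
  have step : ∀ (n : ℕ) (z : Z), ∃ l, f n (x (K n)) - ε n / 4 < f n (x l) ∧
      1 + ‖(z : Y)‖ - 1 / 10 * (1 / 2) ^ (n + 1) < ‖x l - z‖ := by
    intro n z
    obtain ⟨l, h1, h2⟩ := hstar (K n) z z.2 (f n) (min (ε n / 4) (1 / 10 * (1 / 2) ^ (n + 1)))
      (lt_min (by have := hε n; positivity) (by positivity))
    have m1 := min_le_left (ε n / 4) (1 / 10 * (1 / 2 : ℝ) ^ (n + 1))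
    have m2 := min_le_right (ε n / 4) (1 / 10 * (1 / 2 : ℝ) ^ (n + 1))
    exact ⟨l, by linarith, by linarith⟩
  choose L hL1 hL2 using step
  let zs : ℕ → Z := fun n =>
    Nat.rec ⟨0, hZ0⟩ (fun n z => ⟨(z : Y) - x (L n z), hZ z z.2 _⟩) n
  let y : ℕ → Y := fun n => x (L n (zs n))
  have hzs0 : (zs 0).1 = 0 := rfl
  have hzs : ∀ n, (zs (n + 1)).1 = (zs n).1 - y n := fun n => rfl
  have hnorm : ∀ n : ℕ, (n : ℝ) - 1 / 10 * (1 - (1 / 2) ^ n) ≤ ‖(zs n).1‖ := by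
    intro n
    induction n with
    | zero => simp [hzs0]
    | succ n ih =>
      have h1 : 1 + ‖(zs n).1‖ - 1 / 10 * (1 / 2) ^ (n + 1) < ‖y n - (zs n).1‖ := hL2 n (zs n)
      rw [hzs, norm_sub_rev]
      push_cast
      have : (1 / 2 : ℝ) ^ (n + 1) = (1 / 2) ^ n / 2 := by rw [pow_succ]; ring
      rw [this] at h1 ⊢
      linarith
  have hsum : ∀ n, (zs n).1 = -∑ j ∈ Finset.range n, y j := by
    intro n
    induction n with
    | zero => simp [hzs0]
    | succ n ih => rw [hzs, ih, Finset.sum_range_succ]; abel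
  choose g hg1 hg2 using fun n => exists_dual_vector'' ℝ (zs n).1
  have hgy : ∀ n j, j < n → g n (y j) ≤ -(9 / 10) := by
    intro n j hj
    have h1 : g n (zs n).1 = ‖(zs n).1‖ := hg2 n
    have h2 : g n (zs n).1 = -∑ j ∈ Finset.range n, g n (y j) := by
      rw [hsum, map_neg, map_sum]
    have h3 : ∑ j ∈ Finset.range n, (1 + g n (y j)) = n + ∑ j ∈ Finset.range n, g n (y j) := by
      rw [Finset.sum_add_distrib]; simp
    have h4 : 1 + g n (y j) ≤ ∑ j ∈ Finset.range n, (1 + g n (y j)) := by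
      refine Finset.single_le_sum (f := fun j => 1 + g n (y j)) (fun i _ => ?_)
        (Finset.mem_range.2 hj)
      have := (abs_le.1 (abs_apply_le_of_norm_le_one (hg1 n) (hx (L i (zs i))))).1
      show 0 ≤ 1 + g n (x (L i (zs i)))
      linarith
    have h5 := hnorm n
    have h6 : (0 : ℝ) < (1 / 2) ^ n := by positivity
    linarith
  have hgle : ∀ n (w : Y), |g n w| ≤ ‖w‖ := by
    intro n w
    have l1 := (g n).le_opNorm w
    rw [Real.norm_eq_abs] at l1
    have l2 := mul_le_mul_of_nonneg_right (hg1 n) (norm_nonneg w)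
    linarith
  let B : Set Y := range fun n => y n + r n
  have hB : ∀ n, (B ∩ V n).Nonempty := fun n =>
    ⟨y n + r n, mem_range_self n, by rw [hVeq n]; exact hslice n _ (hL1 n (zs n))⟩
  have hsub := hdet B hB
  obtain ⟨l, hl⟩ := hneg (L 0 (zs 0))
  have hl' : x l = -y 0 := hl
  have hd : (x l + a 0) + (x l + b 0) ∈ CC x a b + CC x b a :=
    add_mem_add (CC_add_mem x a b hb ha 0 l) (CC_add_mem x b a ha hb 0 l)
  obtain ⟨p, hp, hpd⟩ := Metric.mem_closure_iff.1 (hsub hd) 1 one_pos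
  have hconv : convexHull ℝ B ⊆ {w | ∃ n0 : ℕ, ∀ n ≥ n0, g n w ≤ 3 / 10} := by
    apply convexHull_min
    · rintro _ ⟨k, rfl⟩
      refine ⟨k + 1, fun n hn => ?_⟩
      have h1 := hgy n k hn
      have h2 := (abs_le.1 ((hgle n (r k)).trans (hr k))).2
      simp only [map_add]
      linarith
    · rintro w1 ⟨n1, h1⟩ w2 ⟨n2, h2⟩ s t hs ht hst
      refine ⟨max n1 n2, fun n hn => ?_⟩
      have e1 := mul_le_mul_of_nonneg_left (h1 n (le_of_max_le_left hn)) hs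
      have e2 := mul_le_mul_of_nonneg_left (h2 n (le_of_max_le_right hn)) ht
      simp only [map_add, map_smul, smul_eq_mul]
      have : s * (3 / 10) + t * (3 / 10) = 3 / 10 := by rw [← add_mul, hst, one_mul]
      linarith
  obtain ⟨n0, hn0⟩ := hconv hp
  have h1 := hn0 (n0 + 1) (by omega)
  have h2 := hgy (n0 + 1) 0 (by omega)
  have h3 := (abs_le.1 ((hgle (n0 + 1) (a 0)).trans (ha 0))).1
  have h4 := (abs_le.1 ((hgle (n0 + 1) (b 0)).trans (hb 0))).1
  have h5 := (abs_le.1 (hgle (n0 + 1) ((x l + a 0) + (x l + b 0) - p))).2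
  rw [← dist_eq_norm] at h5
  simp only [map_sub, map_add, hl', map_neg] at h5
  rw [hl'] at hpd
  linarith

end Aux

theorem exists_symmetric_scd_sets_sum_not_scd
    {Y : Type*} [NormedAddCommGroup Y] [NormedSpace ℝ Y] [CompleteSpace Y]
    (h : DaugavetProperty Y) :
    ∃ C₁ C₂ : Set Y,
      Convex ℝ C₁ ∧ IsClosed C₁ ∧ IsBounded C₁ ∧ C₁ = -C₁ ∧ IsSCD C₁ ∧
      Convex ℝ C₂ ∧ IsClosed C₂ ∧ IsBounded C₂ ∧ C₂ = -C₂ ∧ IsSCD C₂ ∧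
      ¬ IsSCD (C₁ + C₂) := by
  obtain ⟨A, Z, u, φ, hAc, hAne, hA1, hAneg, hZ0, hZ, hφA, hφ1, hφ0, hu, hstar⟩ :=
    exists_system (dps_top h)
  obtain ⟨x, rfl⟩ := hAc.exists_eq_range hAne
  have hx : ∀ k, ‖x k‖ ≤ 1 := fun k => hA1 _ (mem_range_self k)
  have ha : ∀ k, ‖u (2 * k)‖ ≤ 1 / 10 := fun k => hu _
  have hb : ∀ k, ‖u (2 * k + 1)‖ ≤ 1 / 10 := fun k => hu _
  have bdd : ∀ a b : ℕ → Y, (∀ k, ‖a k‖ ≤ 1 / 10) → (∀ k, ‖b k‖ ≤ 1 / 10) →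
      IsBounded (CC x a b) := by
    intro a b ha hb
    rw [isBounded_iff_forall_norm_le]
    exact ⟨_, fun c hc => CC_norm_le hx ha hb hc⟩
  refine ⟨CC x (fun k => u (2 * k)) (fun k => u (2 * k + 1)),
    CC x (fun k => u (2 * k + 1)) (fun k => u (2 * k)),
    absHull_convex _, absHull_closed _, bdd _ _ ha hb, absHull_neg _, ?_,
    absHull_convex _, absHull_closed _, bdd _ _ hb ha, absHull_neg _, ?_, ?_⟩
  · exact CC_isSCD hx ha hb (fun n => φ (2 * n + 1)) (fun n k => hφA _ _ (mem_range_self k))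
      (fun n k => hφ0 _ _ (by omega)) (fun n => hφ1 _) (fun n m hnm => hφ0 _ _ (by omega))
  · exact CC_isSCD hx hb ha (fun n => φ (2 * n)) (fun n k => hφA _ _ (mem_range_self k))
      (fun n k => hφ0 _ _ (by omega)) (fun n => hφ1 _) (fun n m hnm => hφ0 _ _ (by omega))
  · refine CC_sum_not_SCD Z hx ha hb (fun k => ?_) hZ0 (fun z hz k => hZ z hz _ (mem_range_self k)) ?_
    · exact hAneg _ (mem_range_self k)
    · intro k z hz f ε hε
      obtain ⟨_, ⟨l, rfl⟩, h1, h2⟩ := hstar _ (mem_range_self k) z hz f ε hε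
      exact ⟨l, h1, h2⟩
end
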